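/- arXiv:1311.0782 — 3 statements merged into one kernel-verified Lean document; each statement's English description precedes it below -/
import Mathlib

section
/- Let C be a set of (two-colored) partitions closed under horizontal concatenation, vertical concatenation (when colorings match), reflection, and rotation, containing the identity partition. If p ∈ C is a projective partition and q is obtained from p by capping symmetrically (removing the same consecutive points on the upper and lower rows using a one-block partition b ∈ C and joining the affected blocks), and t(q) = t(p), then q is equivalent to p in C, i.e., there exists r ∈ C with r*∘r = p and r∘r* = q. -/
open scoped Classical

/-- A two-colored partition with `k` upper and `l` lower points; `true` = white. -/
structure CPartition where
  k : ℕ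
  l : ℕ
  uc : Fin k → Bool
  lc : Fin l → Bool
  rel : Setoid (Fin k ⊕ Fin l)

namespace CPartition

/-- The disjoint union of two setoids. -/
def sumSetoid {X Y : Type*} (p : Setoid X) (q : Setoid Y) : Setoid (X ⊕ Y) where
  r := Sum.LiftRel p.r q.r
  iseqv := by
    refine ⟨fun x => ?_, fun h => ?_, fun h h' => ?_⟩
    · cases x with
      | inl a => exact Sum.LiftRel.inl (p.iseqv.refl a)
      | inr b => exact Sum.LiftRel.inr (q.iseqv.refl b)
    · cases h with
      | inl h => exact Sum.LiftRel.inl (p.iseqv.symm h)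
      | inr h => exact Sum.LiftRel.inr (q.iseqv.symm h)
    · cases h with
      | inl h =>
        cases h' with
        | inl h' => exact Sum.LiftRel.inl (p.iseqv.trans h h')
      | inr h =>
        cases h' with
        | inr h' => exact Sum.LiftRel.inr (q.iseqv.trans h h')

/-- Horizontal concatenation `p ⊗ q`. -/
def tensor (p q : CPartition) : CPartition where
  k := p.k + q.k
  l := p.l + q.l
  uc := fun i => Sum.elim p.uc q.uc (finSumFinEquiv.symm i)
  lc := fun j => Sum.elim p.lc q.lc (finSumFinEquiv.symm j)
  rel := Setoid.comap
    (fun x => Equiv.sumSumSumComm (Fin p.k) (Fin q.k) (Fin p.l) (Fin q.l)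
      (Sum.map (fun i => finSumFinEquiv.symm i) (fun j => finSumFinEquiv.symm j) x))
    (sumSetoid p.rel q.rel)

/-- Reflection `p*` (exchange the two rows, keeping colors). -/
def reflect (p : CPartition) : CPartition where
  k := p.l
  l := p.k
  uc := p.lc
  lc := p.uc
  rel := Setoid.comap Sum.swap p.rel

/-- The conjugate partition `p̄` : rotate all upper points to the lower row and
conversely (order is reversed and colors are switched). -/
def conj (p : CPartition) : CPartition where
  k := p.l
  l := p.k
  uc := fun i => !(p.lc i.rev)
  lc := fun j => !(p.uc j.rev)
  rel := Setoid.comap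
    (Sum.elim (fun i => Sum.inr i.rev) (fun j => Sum.inl j.rev)) p.rel

/-- Vertical concatenation: `p` on top, then `q` below (requires `p.l = q.k`).
Points of the middle row are identified and removed, blocks being joined along them. -/
def vcomp (p q : CPartition) (h : p.l = q.k) : CPartition where
  k := p.k
  l := q.l
  uc := p.uc
  lc := q.lc
  rel := Setoid.comap (Sum.map id Sum.inr)
    (Relation.EqvGen.setoid (fun x y : Fin p.k ⊕ (Fin p.l ⊕ Fin q.l) =>
      (∃ a b, p.rel.r a b ∧ Sum.map id Sum.inl a = x ∧ Sum.map id Sum.inl b = y) ∨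
      (∃ a b, q.rel.r a b ∧
        Sum.inr (Sum.map (Fin.cast h.symm) id a) = x ∧
        Sum.inr (Sum.map (Fin.cast h.symm) id b) = y)))

/-- Rotation: move the leftmost upper point to the leftmost lower position,
switching its color. -/
def rotDown (p : CPartition) (m : ℕ) (h : p.k = m + 1) : CPartition where
  k := m
  l := p.l + 1
  uc := fun i => p.uc (Fin.cast h.symm i.succ)
  lc := fun j => Fin.cases (!(p.uc (Fin.cast h.symm 0))) p.lc j
  rel := Setoid.comap
    (Sum.elim (fun i => Sum.inl (Fin.cast h.symm i.succ))
      (fun j => Fin.cases (Sum.inl (Fin.cast h.symm (0 : Fin (m + 1))))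
        (fun j' => Sum.inr j') j)) p.rel

/-- Rotation: move the leftmost lower point to the leftmost upper position,
switching its color. -/
def rotUp (p : CPartition) (m : ℕ) (h : p.l = m + 1) : CPartition where
  k := p.k + 1
  l := m
  uc := fun i => Fin.cases (!(p.lc (Fin.cast h.symm 0))) p.uc i
  lc := fun j => p.lc (Fin.cast h.symm j.succ)
  rel := Setoid.comap
    (Sum.elim (fun i => Fin.cases (Sum.inr (Fin.cast h.symm (0 : Fin (m + 1))))
        (fun i' => Sum.inl i') i)
      (fun j => Sum.inr (Fin.cast h.symm j.succ))) p.rel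

/-- The identity partition with coloring `c`. -/
def idPart {n : ℕ} (c : Fin n → Bool) : CPartition where
  k := n
  l := n
  uc := c
  lc := c
  rel := Setoid.ker (Sum.elim id id)

/-- A block (class) of `p` is a through-block when it contains both an upper
and a lower point. -/
def IsThrough (p : CPartition) (c : Quotient p.rel) : Prop :=
  (∃ i : Fin p.k, Quotient.mk p.rel (Sum.inl i) = c) ∧
    (∃ j : Fin p.l, Quotient.mk p.rel (Sum.inr j) = c)

/-- The number `t(p)` of through-blocks of `p`. -/
noncomputable def t (p : CPartition) : ℕ := Nat.card {c : Quotient p.rel // p.IsThrough c}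

/-- A projective partition: `pp = p = p*`. -/
def IsProjective (p : CPartition) : Prop :=
  ∃ h : p.l = p.k, vcomp p p h = p ∧ reflect p = p

/-- Equivalence of projective partitions in `C` : `p ∼ q` iff `r*r = p`, `rr* = q`
for some `r ∈ C`. -/
def EquivIn (C : Set CPartition) (p q : CPartition) : Prop :=
  ∃ r ∈ C, vcomp r (reflect r) rfl = p ∧ vcomp (reflect r) r rfl = q

/-- Position of a point in the counterclockwise planar order. -/
def ptIdx (p : CPartition) : Fin p.k ⊕ Fin p.l → ℕ :=
  Sum.elim (fun i => (i : ℕ)) (fun j => p.k + (p.l - 1 - (j : ℕ)))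

/-- A partition is noncrossing when its strings can be drawn without crossings. -/
def NonCrossing (p : CPartition) : Prop :=
  ∀ a b c d : Fin p.k ⊕ Fin p.l,
    p.ptIdx a < p.ptIdx b → p.ptIdx b < p.ptIdx c → p.ptIdx c < p.ptIdx d →
    p.rel.r a c → p.rel.r b d → p.rel.r a b

/-- The one-block projective partition on `k + k` points, all colored `c`. -/
def piP (k : ℕ) (c : Bool) : CPartition :=
  ⟨k, k, fun _ => c, fun _ => c, ⊤⟩

/-- `π_k` for `k ∈ ℤ \ {0}` : one block, `|k| + |k|` points, white if `k > 0`,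
black if `k < 0`. -/
def piZ (k : ℤ) : CPartition := piP k.natAbs (decide (0 < k))

/-- `π_{0⁺}`, the one-block projective partition with rows colored white–black. -/
def pi0plus : CPartition :=
  ⟨2, 2, ![true, false], ![true, false], ⊤⟩

/-- `θ_k` : one block of `k` points of color `c` on one row. -/
def thetaP (k : ℕ) (c : Bool) : CPartition :=
  ⟨k, 0, fun _ => c, Fin.elim0, ⊤⟩

/-- `β_k = θ_k* θ_k` : one upper block and one lower block of `k` points each,
all of color `c`. -/
def betaP (k : ℕ) (c : Bool) : CPartition :=
  ⟨k, k, fun _ => c, fun _ => c, sumSetoid ⊤ ⊤⟩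

/-- `β_k` for `k : ℤ` (white if `k > 0`, black if `k < 0`, empty if `k = 0`). -/
def betaZ (k : ℤ) : CPartition := betaP k.natAbs (decide (0 < k))

/-- Tensor powers, `tpow p 0` being the empty partition. -/
def tpow (p : CPartition) : ℕ → CPartition
  | 0 => betaP 0 true
  | m + 1 => tensor (tpow p m) p

end CPartition

open CPartition

/-- A category of two-colored partitions: a class of partitions containing the
white identity and stable under horizontal concatenation, vertical concatenation
(when the colorings match), reflection and rotations. -/
structure PartitionCategory where
  mem : Set CPartition
  id_mem : idPart (fun _ : Fin 1 => true) ∈ mem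
  tensor_mem : ∀ p q, p ∈ mem → q ∈ mem → tensor p q ∈ mem
  vcomp_mem : ∀ p q (h : p.l = q.k), p ∈ mem → q ∈ mem →
    (∀ j, p.lc j = q.uc (Fin.cast h j)) → vcomp p q h ∈ mem
  reflect_mem : ∀ p, p ∈ mem → reflect p ∈ mem
  rotDown_mem : ∀ p, p ∈ mem → ∀ m (h : p.k = m + 1), rotDown p m h ∈ mem
  rotUp_mem : ∀ p, p ∈ mem → ∀ m (h : p.l = m + 1), rotUp p m h ∈ mem

/-!
Put `r = p c`, where `c` is the cap. Then `r* r = c* p p c = c* p c = q`. The partition `r r*` is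
determined by the restriction of `r` to the upper row and by the blocks of that row which are
through-blocks of `r`. Both can change under composition with `c` only by merging or cutting off
through-blocks of `p`, hence do not change as `t(r) = t(r* r) = t(q) = t(p)`, and so
`r r* = p p* = p`.

For `r ∈ C`, a strand next to the cap is bent up to the upper row of `p`, passing from
`p (| ⊗ Q)` to a rotation of `p` composed with `Q`; this disposes of the strands to the left of `b`.
Those to its right are replaced by elements of `C`: bending the other lower points of `p` to the
upper row gives some `p' ∈ C`, which absorbs `S = p'* p'` from below, so that
`p (b ⊗ |^{⊗ j₂}) = p (b ⊗ S)`.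
-/

namespace CPartition

open Function

/-! ### Concatenation of relations -/

section Relations

variable {A B U V W X X' Y Y' Z Z' : Type*}

theorem setoid_map_le_iff_le_comap {f : A → B} {r : Setoid A} {s : Setoid B} :
    r.map f ≤ s ↔ r ≤ s.comap f := by
  refine ⟨fun h _ _ hxy => h (Setoid.le_comap_map hxy), fun h => Setoid.eqvGen_le ?_⟩
  rintro _ _ ⟨x, y, hxy, rfl, rfl⟩
  exact h hxy

theorem setoid_comap_equiv_le_iff (e : A ≃ B) {r : Setoid B} {s : Setoid A} :
    r.comap e ≤ s ↔ r ≤ s.comap e.symm := by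
  refine ⟨fun h x y hxy => h ?_, fun h x y hxy => ?_⟩
  · simpa [Setoid.comap_rel] using hxy
  · simpa [Setoid.comap_rel] using h hxy

theorem setoid_map_sup (f : A → B) (r s : Setoid A) : (r ⊔ s).map f = r.map f ⊔ s.map f :=
  GaloisConnection.l_sup (u := Setoid.comap f) fun _ _ => setoid_map_le_iff_le_comap

theorem setoid_map_map (f : A → B) (g : B → V) (r : Setoid A) : (r.map f).map g = r.map (g ∘ f) :=
  eq_of_forall_ge_iff fun s => by simp only [setoid_map_le_iff_le_comap, Setoid.comap_comp]

theorem setoid_comap_map_sup_map_le {S : Type*} {i : A → U} {f : B → U} {e : S → A} {d : S → B}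
    (hi : Injective i) (hf : Injective f) (hpull : ∀ a b, i a = f b → ∃ s, e s = a ∧ d s = b)
    (J : Setoid A) (n : Setoid B) :
    (J.map i ⊔ n.map f).comap f ≤ (J.comap e).map d ⊔ n := by
  set L := (J.comap e).map d ⊔ n
  -- `N u` is the `L`-class in `B` to which `u` gets attached; `N` is constant along both relations.
  let N : U → Set B := fun u =>
    {c | (∃ b, u = f b ∧ L b c) ∨ ∃ a s, u = i a ∧ J a (e s) ∧ L (d s) c}
  have hLd : ∀ s s', J (e s) (e s') → L (d s) (d s') := fun s s' h =>
    (le_sup_left : _ ≤ L) (Setoid.le_comap_map (r := J.comap e) h)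
  have hNf : ∀ b c, c ∈ N (f b) ↔ L b c := by
    refine fun b c => ⟨?_, fun h => Or.inl ⟨b, rfl, h⟩⟩
    rintro (⟨b', hb, h⟩ | ⟨a, s, hab, has, hsc⟩)
    · rwa [hf hb]
    · obtain ⟨s', rfl, rfl⟩ := hpull a b hab.symm
      exact L.trans' (hLd _ _ has) hsc
  have hNi : ∀ a c, c ∈ N (i a) ↔ ∃ s, J a (e s) ∧ L (d s) c := by
    refine fun a c => ⟨?_, fun ⟨s, has, hsc⟩ => Or.inr ⟨a, s, rfl, has, hsc⟩⟩
    rintro (⟨b, hab, h⟩ | ⟨a', s, ha, has, hsc⟩)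
    · obtain ⟨s, rfl, rfl⟩ := hpull a b hab
      exact ⟨s, J.refl' _, h⟩
    · exact ⟨s, hi ha ▸ has, hsc⟩
  have hN : J.map i ⊔ n.map f ≤ Setoid.ker N := by
    refine sup_le (setoid_map_le_iff_le_comap.2 fun a a' h => Set.ext fun c => ?_)
      (setoid_map_le_iff_le_comap.2 fun b b' h => Set.ext fun c => ?_)
    · rw [hNi, hNi]
      exact exists_congr fun s => and_congr_left' ⟨J.trans' (J.symm' h), J.trans' h⟩
    · have hbb : L b b' := (le_sup_right : n ≤ L) h
      rw [hNf, hNf]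
      exact ⟨L.trans' (L.symm' hbb), L.trans' hbb⟩
  intro x y hxy
  have hxyN : N (f x) = N (f y) := hN hxy
  exact (hNf x y).1 (hxyN ▸ (hNf y y).2 (L.refl' y))

theorem setoid_comap_map_sup_map {S : Type*} {i : A → U} {f : B → U} {e : S → A} {d : S → B}
    (hi : Injective i) (hf : Injective f) (hcomm : ∀ s, i (e s) = f (d s))
    (hpull : ∀ a b, i a = f b → ∃ s, e s = a ∧ d s = b) (J : Setoid A) (n : Setoid B) :
    (J.map i ⊔ n.map f).comap f = (J.comap e).map d ⊔ n := by
  refine le_antisymm (setoid_comap_map_sup_map_le hi hf hpull J n) (sup_le ?_ ?_)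
  · refine setoid_map_le_iff_le_comap.2 fun s s' h => ?_
    have hJ : (J.map i) (i (e s)) (i (e s')) := Setoid.le_comap_map (r := J) h
    rw [hcomm, hcomm] at hJ
    exact (le_sup_left : J.map i ≤ J.map i ⊔ n.map f) hJ
  · exact Setoid.le_comap_map.trans fun _ _ h => (le_sup_right : n.map f ≤ J.map i ⊔ n.map f) h

/-- The diagram in which `R` is stacked on top of `S`, with its middle row `Y` still present. -/
def joinRel (R : Setoid (X ⊕ Y)) (S : Setoid (Y ⊕ Z)) : Setoid (X ⊕ (Y ⊕ Z)) :=
  R.map (Sum.map id Sum.inl) ⊔ S.map Sum.inr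

/-- Vertical concatenation on the level of relations: the middle row `Y` is joined and removed. The
rows are arbitrary types, so that reindexing them needs no casts between `Fin`s. -/
def compRel (R : Setoid (X ⊕ Y)) (S : Setoid (Y ⊕ Z)) : Setoid (X ⊕ Z) :=
  (joinRel R S).comap (Sum.map id Sum.inr)

variable {R : Setoid (X ⊕ Y)} {S : Setoid (Y ⊕ Z)} {T : Setoid (Z ⊕ W)}

theorem joinRel_le_iff {J : Setoid (X ⊕ (Y ⊕ Z))} :
    joinRel R S ≤ J ↔ R ≤ J.comap (Sum.map id Sum.inl) ∧ S ≤ J.comap Sum.inr := by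
  rw [joinRel, sup_le_iff, setoid_map_le_iff_le_comap, setoid_map_le_iff_le_comap]

theorem le_comap_joinRel_left : R ≤ (joinRel R S).comap (Sum.map id Sum.inl) :=
  (joinRel_le_iff.1 le_rfl).1

theorem le_comap_joinRel_right : S ≤ (joinRel R S).comap Sum.inr :=
  (joinRel_le_iff.1 le_rfl).2

theorem compRel_le {V : Type*} {J : Setoid V} (φ : X ⊕ (Y ⊕ Z) → V)
    (hR : R ≤ J.comap (φ ∘ Sum.map id Sum.inl)) (hS : S ≤ J.comap (φ ∘ Sum.inr)) :
    compRel R S ≤ J.comap (φ ∘ Sum.map id Sum.inr) :=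
  fun _ _ h => (joinRel_le_iff (J := J.comap φ)).2 ⟨hR, hS⟩ h

theorem compRel_le_comap_compRel {R' : Setoid (X' ⊕ Y')} {S' : Setoid (Y' ⊕ Z')} {f : X → X'}
    {g : Y → Y'} {h : Z → Z'} (hR : R ≤ R'.comap (Sum.map f g)) (hS : S ≤ S'.comap (Sum.map g h)) :
    compRel R S ≤ (compRel R' S').comap (Sum.map f h) := by
  refine (compRel_le (J := joinRel R' S') (Sum.map f (Sum.map g h)) ?_ ?_).trans_eq ?_
  · rintro (x | x) (y | y) hxy <;> exact le_comap_joinRel_left (R := R') (hR hxy)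
  · rintro (x | x) (y | y) hxy <;> exact le_comap_joinRel_right (S := S') (hS hxy)
  · ext (x | x) (y | y) <;> rfl

theorem compRel_comap_equiv (f : X' ≃ X) (g : Y' ≃ Y) (h : Z' ≃ Z) :
    compRel (R.comap (Sum.map f g)) (S.comap (Sum.map g h)) =
      (compRel R S).comap (Sum.map f h) := by
  refine le_antisymm (compRel_le_comap_compRel le_rfl le_rfl) ?_
  have hinv : compRel R S ≤ (compRel (R.comap (Sum.map f g)) (S.comap (Sum.map g h))).comap
      (Sum.map f.symm h.symm) := by
    refine compRel_le_comap_compRel (g := g.symm) (le_of_eq ?_) (le_of_eq ?_) <;>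
      ext (x | x) (y | y) <;> simp [Setoid.comap_rel]
  exact (setoid_comap_equiv_le_iff (Equiv.sumCongr f h)).2 hinv

theorem compRel_assoc : compRel (compRel R S) T = compRel R (compRel S T) := by
  have hinl : Injective (Sum.map id Sum.inl : Y ⊕ Z → Y ⊕ (Z ⊕ W)) :=
    injective_id.sumMap Sum.inl_injective
  have hinr : Injective (Sum.map id Sum.inr : Y ⊕ W → Y ⊕ (Z ⊕ W)) :=
    injective_id.sumMap Sum.inr_injective
  have hleft : joinRel (compRel R S) T =
      ((joinRel R S).map (Sum.map id (Sum.map id Sum.inl)) ⊔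
        (T.map Sum.inr).map (Sum.map id Sum.inr)).comap (Sum.map id Sum.inr) :=
    (setoid_comap_map_sup_map (injective_id.sumMap hinl) (injective_id.sumMap Sum.inr_injective)
      (by simp) (by simp) _ _).symm
  have hright : joinRel R (compRel S T) =
      ((joinRel S T).map Sum.inr ⊔ (R.map (Sum.map id Sum.inl)).map
        (Sum.map id (Sum.map id Sum.inr))).comap (Sum.map id (Sum.map id Sum.inr)) := by
    rw [joinRel, sup_comm]
    exact (setoid_comap_map_sup_map Sum.inr_injective (injective_id.sumMap hinr)
      (by simp) (by simp) _ _).symm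
  have htotal : (joinRel R S).map (Sum.map id (Sum.map id Sum.inl)) ⊔
        (T.map Sum.inr).map (Sum.map id Sum.inr) =
      (joinRel S T).map Sum.inr ⊔ (R.map (Sum.map id Sum.inl)).map
        (Sum.map id (Sum.map id Sum.inr)) := by
    simp only [joinRel, setoid_map_sup, setoid_map_map, Sum.map_comp_map, CompTriple.comp_eq]
    rw [sup_assoc, sup_comm]
    rfl
  rw [compRel, hleft, htotal, compRel, hright]
  ext (x | w) (x' | w') <;> rfl

/-- The relation of the identity partition on the row `X`: each upper point is joined to the lower
point below it. -/
def idRel (X : Type*) : Setoid (X ⊕ X) :=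
  Setoid.ker (Sum.elim id id)

theorem idRel_le_iff {J : Setoid (X ⊕ X)} : idRel X ≤ J ↔ ∀ x, J (Sum.inl x) (Sum.inr x) := by
  refine ⟨fun h x => h rfl, ?_⟩
  rintro h (x | x) (y | y) (rfl : x = y)
  exacts [J.refl' _, h x, J.symm' (h x), J.refl' _]

theorem joinRel_idRel_left (x : X ⊕ Y) :
    joinRel (idRel X) R (Sum.map id Sum.inr x) (Sum.inr x) := by
  rcases x with x | y
  · exact idRel_le_iff.1 le_comap_joinRel_left x
  · exact Setoid.refl' _ _

theorem joinRel_idRel_right (x : X ⊕ Y) :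
    joinRel R (idRel Y) (Sum.map id Sum.inr x) (Sum.map id Sum.inl x) := by
  rcases x with x | y
  · exact Setoid.refl' _ _
  · exact Setoid.symm' _ (idRel_le_iff.1 le_comap_joinRel_right y)

theorem compRel_idRel_left : compRel (idRel X) R = R := by
  refine le_antisymm ?_ fun x y h => ?_
  · refine (compRel_le (J := R) (Sum.elim Sum.inl id) ?_ le_rfl).trans_eq ?_
    · exact idRel_le_iff.2 fun x => R.refl' _
    · ext (x | x) (y | y) <;> rfl
  · exact (joinRel _ _).trans' (joinRel_idRel_left x)
      ((joinRel _ _).trans' (le_comap_joinRel_right h) ((joinRel _ _).symm' (joinRel_idRel_left y)))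

theorem compRel_idRel_right : compRel R (idRel Y) = R := by
  refine le_antisymm ?_ fun x y h => ?_
  · refine (compRel_le (J := R) (Sum.elim Sum.inl (Sum.elim Sum.inr Sum.inr)) ?_ ?_).trans_eq ?_
    · rintro (x | x) (y | y) h <;> exact h
    · exact idRel_le_iff.2 fun x => R.refl' _
    · ext (x | x) (y | y) <;> rfl
  · exact (joinRel _ _).trans' (joinRel_idRel_right x)
      ((joinRel _ _).trans' (le_comap_joinRel_left h) ((joinRel _ _).symm' (joinRel_idRel_right y)))

/-- Horizontal concatenation on the level of relations. -/
def tensorRel (R : Setoid (X ⊕ Y)) (R' : Setoid (X' ⊕ Y')) :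
    Setoid ((X ⊕ X') ⊕ (Y ⊕ Y')) :=
  (sumSetoid R R').comap (Equiv.sumSumSumComm X X' Y Y')

theorem sumSetoid_le_iff {R : Setoid A} {R' : Setoid B} {J : Setoid (A ⊕ B)} :
    sumSetoid R R' ≤ J ↔ R ≤ J.comap Sum.inl ∧ R' ≤ J.comap Sum.inr := by
  refine ⟨fun h => ⟨fun _ _ hR => h (.inl hR), fun _ _ hR => h (.inr hR)⟩, ?_⟩
  rintro ⟨h, h'⟩ _ _ (hR | hR)
  exacts [h hR, h' hR]

theorem tensorRel_le_iff {R' : Setoid (X' ⊕ Y')} {J : Setoid ((X ⊕ X') ⊕ (Y ⊕ Y'))} :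
    tensorRel R R' ≤ J ↔
      R ≤ J.comap (Sum.map Sum.inl Sum.inl) ∧ R' ≤ J.comap (Sum.map Sum.inr Sum.inr) := by
  rw [tensorRel, setoid_comap_equiv_le_iff, sumSetoid_le_iff]
  refine and_congr (iff_of_eq (congrArg _ ?_)) (iff_of_eq (congrArg _ ?_)) <;>
    ext (x | x) (y | y) <;> rfl

theorem le_comap_tensorRel_left {R' : Setoid (X' ⊕ Y')} :
    R ≤ (tensorRel R R').comap (Sum.map Sum.inl Sum.inl) :=
  (tensorRel_le_iff.1 le_rfl).1

theorem le_comap_tensorRel_right {R' : Setoid (X' ⊕ Y')} :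
    R' ≤ (tensorRel R R').comap (Sum.map Sum.inr Sum.inr) :=
  (tensorRel_le_iff.1 le_rfl).2

variable {R' : Setoid (X' ⊕ Y')} {S' : Setoid (Y' ⊕ Z')}

theorem compRel_tensorRel_tensorRel :
    compRel (tensorRel R R') (tensorRel S S') = tensorRel (compRel R S) (compRel R' S') := by
  refine le_antisymm ?_ (tensorRel_le_iff.2 ⟨?_, ?_⟩)
  · let φ : (X ⊕ X') ⊕ ((Y ⊕ Y') ⊕ (Z ⊕ Z')) → (X ⊕ (Y ⊕ Z)) ⊕ (X' ⊕ (Y' ⊕ Z')) :=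
      Sum.elim (Sum.map Sum.inl Sum.inl)
        (Sum.elim (Sum.map (Sum.inr ∘ Sum.inl) (Sum.inr ∘ Sum.inl))
          (Sum.map (Sum.inr ∘ Sum.inr) (Sum.inr ∘ Sum.inr)))
    refine (compRel_le (J := sumSetoid (joinRel R S) (joinRel R' S')) φ
      (tensorRel_le_iff.2 ⟨?_, ?_⟩) (tensorRel_le_iff.2 ⟨?_, ?_⟩)).trans ?_
    · rintro (x | x) (y | y) h <;> exact .inl (le_comap_joinRel_left h)
    · rintro (x | x) (y | y) h <;> exact .inr (le_comap_joinRel_left h)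
    · rintro (x | x) (y | y) h <;> exact .inl (le_comap_joinRel_right h)
    · rintro (x | x) (y | y) h <;> exact .inr (le_comap_joinRel_right h)
    · rintro ((x | x) | (x | x)) ((y | y) | (y | y)) h <;> cases h <;> constructor <;> assumption
  · exact (compRel_le_comap_compRel le_comap_tensorRel_left le_comap_tensorRel_left)
  · exact (compRel_le_comap_compRel le_comap_tensorRel_right le_comap_tensorRel_right)

/-- Reflection on the level of relations: the rows exchange their roles. -/
def swapRel (R : Setoid (X ⊕ Y)) : Setoid (Y ⊕ X) :=
  R.comap Sum.swap

theorem swapRel_swapRel : swapRel (swapRel R) = R := by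
  ext (x | x) (y | y) <;> rfl

theorem compRel_swapRel_le :
    compRel (swapRel S) (swapRel R) ≤ swapRel (compRel R S) := by
  refine (compRel_le (J := joinRel R S)
    (Sum.elim (Sum.inr ∘ Sum.inr) (Sum.elim (Sum.inr ∘ Sum.inl) Sum.inl)) ?_ ?_).trans_eq ?_
  · rintro (x | x) (y | y) h <;> exact le_comap_joinRel_right (S := S) h
  · rintro (x | x) (y | y) h <;> exact le_comap_joinRel_left (R := R) h
  · ext (x | x) (y | y) <;> rfl

theorem swapRel_compRel : swapRel (compRel R S) = compRel (swapRel S) (swapRel R) := by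
  refine le_antisymm (fun _ _ h => ?_) compRel_swapRel_le
  rw [← swapRel_swapRel (R := R), ← swapRel_swapRel (R := S)] at h
  have := compRel_swapRel_le h
  rwa [swapRel, Setoid.comap_rel, Sum.swap_swap, Sum.swap_swap] at this

/-- Regarded as part of the upper row instead of the middle one, `U` is not affected by `S`. -/
theorem compRel_tensorRel_idRel {R : Setoid ((X ⊕ U) ⊕ Y)} :
    compRel (R.comap (Equiv.sumAssoc X U Y).symm) (tensorRel (idRel U) S) =
      (compRel R S).comap (Equiv.sumAssoc X U Z).symm := by
  set R' := R.comap (Equiv.sumAssoc X U Y).symm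
  refine le_antisymm ?_ ((setoid_comap_equiv_le_iff (Equiv.sumAssoc X U Z).symm).2 ?_)
  · let φ : X ⊕ ((U ⊕ Y) ⊕ (U ⊕ Z)) → (X ⊕ U) ⊕ (Y ⊕ Z) :=
      Sum.elim (Sum.inl ∘ Sum.inl) (Sum.elim (Sum.map Sum.inr Sum.inl) (Sum.map Sum.inr Sum.inr))
    refine (compRel_le (J := joinRel R S) φ ?_ (tensorRel_le_iff.2 ⟨?_, ?_⟩)).trans_eq ?_
    · rintro (x | x | x) (y | y | y) h <;> exact le_comap_joinRel_left (R := R) h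
    · exact idRel_le_iff.2 fun u => (joinRel R S).refl' _
    · rintro (x | x) (y | y) h <;> exact le_comap_joinRel_right (S := S) h
    · ext (x | x | x) (y | y | y) <;> rfl
  · let J := joinRel R' (tensorRel (idRel U) S)
    let φ : (X ⊕ U) ⊕ (Y ⊕ Z) → X ⊕ ((U ⊕ Y) ⊕ (U ⊕ Z)) :=
      Sum.elim (Sum.map id (Sum.inr ∘ Sum.inl)) (Sum.inr ∘ Sum.map Sum.inr Sum.inr)
    have hstrand : ∀ u, J (Sum.inr (Sum.inl (Sum.inl u))) (Sum.inr (Sum.inr (Sum.inl u))) :=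
      fun u => le_comap_joinRel_right (le_comap_tensorRel_left (idRel_le_iff.1 le_rfl u))
    have hφ : ∀ x : (X ⊕ U) ⊕ Y, J (φ (Sum.map id Sum.inl x))
        (Sum.map id Sum.inl (Equiv.sumAssoc X U Y x)) := by
      rintro ((x | u) | y)
      exacts [J.refl' _, J.symm' (hstrand u), J.refl' _]
    refine (compRel_le (J := J) φ (fun x y h => ?_) ?_).trans_eq ?_
    · have h' : R' (Equiv.sumAssoc X U Y x) (Equiv.sumAssoc X U Y y) := by
        simpa [R', Setoid.comap_rel] using h
      exact J.trans' (hφ x) (J.trans' (le_comap_joinRel_left h') (J.symm' (hφ y)))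
    · rintro (x | x) (y | y) h <;>
        exact le_comap_joinRel_right (S := tensorRel (idRel U) S) (le_comap_tensorRel_right h)
    · ext ((x | x) | x) ((y | y) | y) <;> rfl

theorem compRel_comap_sumMap_id_left (f : X' ≃ X) :
    compRel (R.comap (Sum.map f id)) S = (compRel R S).comap (Sum.map f id) := by
  simpa [Setoid.comap_id] using compRel_comap_equiv (R := R) (S := S) f (.refl _) (.refl _)

theorem compRel_comap_tensorRel_idRel {R : Setoid (X ⊕ Y')} (g : Y' ≃ U ⊕ Y) (h : Z' ≃ U ⊕ Z) :
    compRel R ((tensorRel (idRel U) S).comap (Sum.map g h)) =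
      (compRel (R.comap (Sum.map id g.symm ∘ Equiv.sumAssoc X U Y)) S).comap
        ((Equiv.sumAssoc X U Z).symm ∘ Sum.map id h) := by
  rw [Setoid.comap_comp, ← compRel_tensorRel_idRel, ← Equiv.coe_refl,
    ← compRel_comap_equiv (.refl X) g h]
  congr 1
  ext (x | x) (y | y) <;> simp [Setoid.comap_rel]

/-! ### The upper row of a concatenation -/

/-- The partition which the blocks of `R` induce on the upper row. -/
def upperRel (R : Setoid (X ⊕ Y)) : Setoid X :=
  R.comap Sum.inl

/-- The upper points lying on a through-block of `R`. -/
def upperThrough (R : Setoid (X ⊕ Y)) : Set X :=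
  {x | ∃ y, R (Sum.inl x) (Sum.inr y)}

theorem mem_upperThrough_congr {x x' : X} (h : upperRel R x x') :
    x ∈ upperThrough R ↔ x' ∈ upperThrough R :=
  exists_congr fun _ => ⟨R.trans' (R.symm' h), R.trans' h⟩

theorem upperRel_le_upperRel_compRel : upperRel R ≤ upperRel (compRel R S) :=
  fun _ _ h => le_comap_joinRel_left (S := S) h

/-- Only the through-blocks of `R` can grow under concatenation: an upper point outside them keeps
its own `R`-class as an invariant, and everything else gets the label `none`. -/
theorem compRel_le_ker_upperClass : compRel R S ≤ Setoid.ker (Sum.elim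
    (fun x => if x ∈ upperThrough R then none else some (Quotient.mk (upperRel R) x))
    fun _ : Z => none) := by
  let φ : X ⊕ (Y ⊕ Z) → Option (Quotient (upperRel R)) :=
    Sum.elim (fun x => if x ∈ upperThrough R then none else some ⟦x⟧) fun _ => none
  refine (compRel_le (J := ⊥) φ ?_ fun _ _ _ => rfl).trans_eq ?_
  · rintro (x | y) (x' | y') h
    · have hiff := mem_upperThrough_congr h
      by_cases hx : x ∈ upperThrough R
      · exact (if_pos hx).trans (if_pos (hiff.1 hx)).symm
      · exact (if_neg hx).trans ((congrArg some (Quotient.sound (s := upperRel R) h)).trans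
          (if_neg (hiff.not.1 hx)).symm)
    · exact if_pos ⟨y', h⟩
    · exact (if_pos ⟨y, R.symm' h⟩).symm
    · rfl
  · ext (x | z) (x' | z') <;> rfl

theorem upperRel_compRel_imp {x y : X} (h : upperRel (compRel R S) x y) :
    upperRel R x y ∨ x ∈ upperThrough R ∧ y ∈ upperThrough R := by
  have hclass := compRel_le_ker_upperClass h
  by_cases hx : x ∈ upperThrough R <;> by_cases hy : y ∈ upperThrough R <;>
    simp_all [Setoid.ker_def, Quotient.eq]

theorem upperThrough_compRel_subset : upperThrough (compRel R S) ⊆ upperThrough R := by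
  rintro x ⟨z, h⟩
  have hclass := compRel_le_ker_upperClass h
  by_contra hx
  simp_all [Setoid.ker_def]

theorem compRel_swapRel_self_le : compRel R (swapRel R) ≤ (upperRel R).comap (Sum.elim id id) := by
  refine (compRel_le (J := R) (Sum.elim Sum.inl Sum.swap) ?_ le_rfl).trans_eq ?_
  · rintro (x | x) (y | y) h <;> exact h
  · ext (x | x) (y | y) <;> rfl

theorem compRel_swapRel_self_iff {a b : X ⊕ X} :
    compRel R (swapRel R) a b ↔ upperRel R (Sum.elim id id a) (Sum.elim id id b) ∧
      (a.isLeft = b.isLeft ∨ Sum.elim id id a ∈ upperThrough R) := by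
  let J := joinRel R (swapRel R)
  constructor
  · refine fun h => ⟨compRel_swapRel_self_le h, ?_⟩
    rcases a with a | a <;> rcases b with b | b
    · exact Or.inl rfl
    · exact Or.inr (upperThrough_compRel_subset ⟨b, h⟩)
    · exact Or.inr ((mem_upperThrough_congr (compRel_swapRel_self_le h)).2
        (upperThrough_compRel_subset ⟨a, Setoid.symm' _ h⟩))
    · exact Or.inl rfl
  · have hup : ∀ x y, R (Sum.inl x) (Sum.inl y) → J (Sum.inl x) (Sum.inl y) :=
      fun _ _ h => le_comap_joinRel_left (R := R) h
    have hlow : ∀ x y, R (Sum.inl x) (Sum.inl y) → J (Sum.inr (Sum.inr x)) (Sum.inr (Sum.inr y)) :=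
      fun _ _ h => le_comap_joinRel_right (S := swapRel R) h
    have hthrough : ∀ x ∈ upperThrough R, J (Sum.inl x) (Sum.inr (Sum.inr x)) :=
      fun x ⟨y, h⟩ => J.trans' (le_comap_joinRel_left (R := R) h)
        (le_comap_joinRel_right (S := swapRel R) (R.symm' h))
    rintro ⟨h, hside⟩
    rcases a with a | a <;> rcases b with b | b
    · exact hup a b h
    · exact J.trans' (hthrough a (by simpa using hside)) (hlow a b h)
    · exact J.trans' (J.symm' (hthrough a (by simpa using hside))) (hup a b h)
    · exact hlow a b h

theorem upperRel_compRel_swapRel_self : upperRel (compRel R (swapRel R)) = upperRel R :=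
  Setoid.ext fun _ _ => compRel_swapRel_self_iff.trans (by simp)

theorem upperThrough_compRel_swapRel_self :
    upperThrough (compRel R (swapRel R)) = upperThrough R := by
  refine upperThrough_compRel_subset.antisymm fun x hx => ⟨x, ?_⟩
  exact compRel_swapRel_self_iff.2 ⟨R.refl' _, Or.inr hx⟩

theorem compRel_compRel_swapRel_self : compRel R (compRel (swapRel R) R) = R := by
  rw [← compRel_assoc]
  let J := joinRel (compRel R (swapRel R)) R
  refine le_antisymm ?_ ?_
  · refine (compRel_le (J := R) (Sum.elim Sum.inl id) ?_ le_rfl).trans_eq ?_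
    · rintro (x | x) (y | y) h <;> exact compRel_swapRel_self_le h
    · ext (x | x) (y | y) <;> rfl
  · have hupper : ∀ x y, upperRel R x y → J (Sum.inl x) (Sum.inl y) := fun x y h =>
      le_comap_joinRel_left (R := compRel R (swapRel R))
        (compRel_swapRel_self_iff (a := Sum.inl x) (b := Sum.inl y).2 ⟨h, .inl rfl⟩)
    have hthrough : ∀ x y, R (Sum.inl x) (Sum.inr y) → J (Sum.inl x) (Sum.inr (Sum.inr y)) :=
      fun x y h => J.trans' (le_comap_joinRel_left (R := compRel R (swapRel R))
        (compRel_swapRel_self_iff (a := Sum.inl x) (b := Sum.inr x).2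
          ⟨R.refl' _, .inr ⟨y, h⟩⟩))
        (le_comap_joinRel_right (S := R) h)
    rintro (x | x) (y | y) h
    · exact hupper x y h
    · exact hthrough x y h
    · exact J.symm' (hthrough y x (R.symm' h))
    · exact le_comap_joinRel_right (S := R) h

/-- The number of blocks of `r` that meet `T`. For the upper row of a partition and the points on
its through-blocks, this is the number of through-blocks. -/
noncomputable def blockCount (r : Setoid X) (T : Set X) : ℕ :=
  Nat.card (Quotient (r.comap (Subtype.val : T → X)))

theorem eq_of_blockCount_le [Finite X] {r r' : Setoid X} {T T' : Set X} (hr : r ≤ r') (hT : T' ⊆ T)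
    (hsat : ∀ x y, r' x y → y ∈ T' → x ∈ T') (hout : ∀ x y, r' x y → r x y ∨ x ∈ T ∧ y ∈ T)
    (hcard : blockCount r T ≤ blockCount r' T') : r' = r ∧ T' = T := by
  let s := r.comap (Subtype.val : T → X)
  let s' := r'.comap (Subtype.val : T' → X)
  let F : Quotient s' → Quotient s := fun c => Quotient.mk s ⟨c.out.1, hT c.out.2⟩
  have hFinj : Injective F := fun c d hcd =>
    Quotient.out_equiv_out.1 (hr (Quotient.exact (s := s) hcd))
  have hFsurj : Surjective F := (hFinj.bijective_of_nat_card_le hcard).2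
  have hrep : ∀ x ∈ T, ∃ c : Quotient s', r c.out.1 x := fun x hx => by
    obtain ⟨c, hc⟩ := hFsurj ⟦⟨x, hx⟩⟧
    exact ⟨c, Quotient.exact (s := s) hc⟩
  constructor
  · refine le_antisymm (fun x y hxy => ?_) hr
    obtain h | ⟨hx, hy⟩ := hout x y hxy
    · exact h
    obtain ⟨c, hc⟩ := hrep x hx
    obtain ⟨d, hd⟩ := hrep y hy
    have hcd : c = d := Quotient.out_equiv_out.1
      (r'.trans' (hr hc) (r'.trans' hxy (r'.symm' (hr hd))))
    subst hcd
    exact r.trans' (r.symm' hc) hd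
  · refine hT.antisymm fun x hx => ?_
    obtain ⟨c, hc⟩ := hrep x hx
    exact hsat _ _ (r'.symm' (hr hc)) c.out.2

end Relations

/-! ### Concatenation and rotation of partitions -/

theorem ext_cast {p q : CPartition} (hk : p.k = q.k) (hl : p.l = q.l)
    (huc : p.uc = q.uc ∘ Fin.cast hk) (hlc : p.lc = q.lc ∘ Fin.cast hl)
    (hrel : p.rel = q.rel.comap (Sum.map (Fin.cast hk) (Fin.cast hl))) : p = q := by
  obtain ⟨k, l, uc, lc, R⟩ := p
  obtain ⟨k', l', uc', lc', R'⟩ := q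
  obtain rfl : k = k' := hk
  obtain rfl : l = l' := hl
  obtain rfl : uc = uc' := huc
  obtain rfl : lc = lc' := hlc
  refine congrArg _ (hrel.trans ?_)
  ext (x | x) (y | y) <;> rfl

theorem vcomp_mk {k l m : ℕ} {uc : Fin k → Bool} {mc mc' : Fin l → Bool} {lc : Fin m → Bool}
  {R : Setoid (Fin k ⊕ Fin l)} {S : Setoid (Fin l ⊕ Fin m)} :
    vcomp ⟨k, l, uc, mc, R⟩ ⟨l, m, mc', lc, S⟩ rfl =
    ⟨k, m, uc, lc, compRel R S⟩ := by
  refine congrArg (fun J => CPartition.mk k m uc lc (Setoid.comap (Sum.map id Sum.inr) J))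
    (le_antisymm (Setoid.eqvGen_le ?_) (joinRel_le_iff.2 ⟨?_, ?_⟩))
  · rintro _ _ (⟨a, b, h, rfl, rfl⟩ | ⟨a, b, h, rfl, rfl⟩)
    · exact le_comap_joinRel_left h
    · rcases a with a | a <;> rcases b with b | b <;> exact le_comap_joinRel_right (S := S) h
  · exact fun a b h => .rel _ _ (Or.inl ⟨a, b, h, rfl, rfl⟩)
  · rintro (a | a) (b | b) h <;> exact .rel _ _ (Or.inr ⟨_, _, h, rfl, rfl⟩)

theorem vcomp_assoc (p q r : CPartition) (hpq : p.l = q.k) (hqr : q.l = r.k) :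
    vcomp (vcomp p q hpq) r hqr = vcomp p (vcomp q r hqr) hpq := by
  obtain ⟨_, _, _, _, _⟩ := p
  obtain ⟨_, _, _, _, _⟩ := q
  obtain ⟨_, _, _, _, _⟩ := r
  dsimp only at hpq hqr
  subst hpq hqr
  simp only [vcomp_mk]
  rw [compRel_assoc]

theorem idPart_vcomp (p : CPartition) {n : ℕ} (h : n = p.k) (c : Fin n → Bool)
    (hc : ∀ i, c i = p.uc (i.cast h)) : vcomp (idPart c) p h = p := by
  subst h
  obtain rfl : c = p.uc := funext hc
  exact vcomp_mk.trans (congrArg _ compRel_idRel_left)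

theorem reflect_vcomp (p q : CPartition) (h : p.l = q.k) :
    reflect (vcomp p q h) = vcomp (reflect q) (reflect p) h.symm := by
  obtain ⟨_, _, _, _, _⟩ := p
  obtain ⟨_, _, _, _, _⟩ := q
  dsimp only at h
  subst h
  refine (congrArg reflect vcomp_mk).trans (Eq.trans ?_ vcomp_mk.symm)
  exact congrArg _ swapRel_compRel

theorem vcomp_idPart (p : CPartition) {n : ℕ} (h : p.l = n) (c : Fin n → Bool)
    (hc : ∀ j, p.lc j = c (j.cast h)) : vcomp p (idPart c) h = p := by
  subst h
  obtain rfl : p.lc = c := funext hc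
  exact vcomp_mk.trans (congrArg _ compRel_idRel_right)

theorem reflect_reflect (p : CPartition) : reflect (reflect p) = p :=
  congrArg (CPartition.mk p.k p.l p.uc p.lc) swapRel_swapRel

theorem tensor_mk {k l k' l' : ℕ} {uc : Fin k → Bool} {lc : Fin l → Bool} {uc' : Fin k' → Bool}
    {lc' : Fin l' → Bool} {R : Setoid (Fin k ⊕ Fin l)} {R' : Setoid (Fin k' ⊕ Fin l')} :
    tensor ⟨k, l, uc, lc, R⟩ ⟨k', l', uc', lc', R'⟩ =
      ⟨k + k', l + l', Fin.append uc uc', Fin.append lc lc',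
        (tensorRel R R').comap (Sum.map finSumFinEquiv.symm finSumFinEquiv.symm)⟩ := by
  have happend {n n' : ℕ} (c : Fin n → Bool) (c' : Fin n' → Bool) :
      (fun i => Sum.elim c c' (finSumFinEquiv.symm i)) = Fin.append c c' := by
    funext i
    refine i.addCases (fun i => ?_) fun i => ?_ <;> simp
  rw [← happend, ← happend]
  rfl

theorem tensor_vcomp_tensor (p q p' q' : CPartition) (h : p.l = p'.k) (h' : q.l = q'.k) :
    vcomp (tensor p q) (tensor p' q') (congrArg₂ (· + ·) h h') =
      tensor (vcomp p p' h) (vcomp q q' h') := by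
  obtain ⟨_, _, _, _, _⟩ := p
  obtain ⟨_, _, _, _, _⟩ := q
  obtain ⟨_, _, _, _, _⟩ := p'
  obtain ⟨_, _, _, _, _⟩ := q'
  dsimp only at h h'
  subst h h'
  simp only [vcomp_mk, tensor_mk]
  exact congrArg _ ((compRel_comap_equiv finSumFinEquiv.symm finSumFinEquiv.symm
    finSumFinEquiv.symm).trans (congrArg _ compRel_tensorRel_tensorRel))

theorem tensor_rel_le_iff {p q : CPartition}
    {J : Setoid (Fin (tensor p q).k ⊕ Fin (tensor p q).l)} :
    (tensor p q).rel ≤ J ↔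
      p.rel ≤ J.comap (Sum.map (Fin.castAdd q.k) (Fin.castAdd q.l)) ∧
        q.rel ≤ J.comap (Sum.map (Fin.natAdd p.k) (Fin.natAdd p.l)) := by
  refine (setoid_comap_equiv_le_iff (Equiv.sumCongr finSumFinEquiv.symm finSumFinEquiv.symm)
    (r := tensorRel p.rel q.rel)).trans (tensorRel_le_iff.trans ?_)
  refine and_congr (iff_of_eq (congrArg _ ?_)) (iff_of_eq (congrArg _ ?_)) <;>
    ext (x | x) (y | y) <;> rfl

theorem vcomp_congr_right {P Q Q' : CPartition} (h : P.l = Q.k) (hQ : Q = Q') :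
    vcomp P Q h = vcomp P Q' (h.trans (congrArg CPartition.k hQ)) := by
  subst hQ
  rfl

theorem tensor_uc (p q : CPartition) : (tensor p q).uc = Fin.append p.uc q.uc := by
  funext i
  refine i.addCases (fun i => ?_) fun i => ?_ <;> simp [tensor]

theorem tensor_lc (p q : CPartition) : (tensor p q).lc = Fin.append p.lc q.lc := by
  funext i
  refine i.addCases (fun i => ?_) fun i => ?_ <;> simp [tensor]

theorem ext_cast_of_rel_le_iff {p q : CPartition} (hk : p.k = q.k) (hl : p.l = q.l)
    (huc : p.uc = q.uc ∘ Fin.cast hk) (hlc : p.lc = q.lc ∘ Fin.cast hl)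
    (hrel : ∀ J : Setoid (Fin q.k ⊕ Fin q.l),
      p.rel ≤ J.comap (Sum.map (Fin.cast hk) (Fin.cast hl)) ↔ q.rel ≤ J) : p = q := by
  refine ext_cast hk hl huc hlc (le_antisymm ((hrel _).2 le_rfl) ?_)
  exact (setoid_comap_equiv_le_iff (Equiv.sumCongr (finCongr hk) (finCongr hl))).2 ((hrel _).1 (by
    refine le_of_eq ?_
    ext (x | x) (y | y) <;> rfl))

theorem tensor_rel_le_comap_iff {p q : CPartition} {X Y : Type*} {f : Fin (tensor p q).k → X}
    {g : Fin (tensor p q).l → Y} {J : Setoid (X ⊕ Y)} :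
    (tensor p q).rel ≤ J.comap (Sum.map f g) ↔
      p.rel ≤ J.comap (Sum.map (f ∘ Fin.castAdd q.k) (g ∘ Fin.castAdd q.l)) ∧
        q.rel ≤ J.comap (Sum.map (f ∘ Fin.natAdd p.k) (g ∘ Fin.natAdd p.l)) := by
  refine tensor_rel_le_iff.trans (and_congr (iff_of_eq (congrArg _ ?_))
    (iff_of_eq (congrArg _ ?_))) <;>
  ext (x | x) (y | y) <;> rfl

theorem tensor_assoc (p q r : CPartition) :
    tensor (tensor p q) r = tensor p (tensor q r) := by
  refine ext_cast_of_rel_le_iff (add_assoc _ _ _) (add_assoc _ _ _) ?_ ?_ fun J => ?_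
  · simp only [tensor_uc]
    exact Fin.append_assoc p.uc q.uc r.uc
  · simp only [tensor_lc]
    exact Fin.append_assoc p.lc q.lc r.lc
  · have hcast : ∀ k₁ k₂ k₃, Fin.cast (add_assoc k₁ k₂ k₃) ∘ Fin.natAdd (k₁ + k₂) =
        Fin.natAdd k₁ ∘ Fin.natAdd k₂ := fun k₁ k₂ k₃ =>
      funext fun i => Fin.ext (add_assoc k₁ k₂ i)
    rw [tensor_rel_le_comap_iff, tensor_rel_le_comap_iff, tensor_rel_le_iff, and_assoc]
    refine Iff.trans ?_ (and_congr_right' tensor_rel_le_comap_iff.symm)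
    refine and_congr Iff.rfl (and_congr Iff.rfl (iff_of_eq ?_))
    exact congrArg₂ (fun f g => r.rel ≤ J.comap (Sum.map f g)) (hcast _ _ _) (hcast _ _ _)

theorem tensor_idPart_zero (c : Fin 0 → Bool) (p : CPartition) : tensor (idPart c) p = p := by
  refine ext_cast_of_rel_le_iff (zero_add _) (zero_add _) ?_ ?_ fun J => ?_
  · rw [tensor_uc]
    exact Fin.append_left_nil c p.uc rfl
  · rw [tensor_lc]
    exact Fin.append_left_nil c p.lc rfl
  · have hcast : ∀ n, Fin.cast (zero_add n) ∘ Fin.natAdd 0 = id := fun n =>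
      funext fun i => Fin.ext (zero_add i.1)
    rw [tensor_rel_le_comap_iff]
    refine (and_iff_right (idRel_le_iff.2 fun x => x.elim0)).trans (iff_of_eq ?_)
    refine (congrArg₂ (fun f g => p.rel ≤ J.comap (Sum.map f g)) (hcast _) (hcast _)).trans ?_
    rw [Sum.map_id_id, Setoid.comap_id]

theorem idPart_succ {n : ℕ} (c : Fin (n + 1) → Bool) :
    idPart c = tensor (idPart fun _ : Fin 1 => c 0) (idPart fun i => c i.succ) := by
  have hcolor : Fin.append (fun _ : Fin 1 => c 0) (fun i => c i.succ) =
      c ∘ Fin.cast (add_comm 1 n) := by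
    rw [Fin.append_left_eq_cons]
    exact congrArg (· ∘ _) (Fin.cons_self_tail c)
  refine (ext_cast_of_rel_le_iff (add_comm _ _) (add_comm _ _) ((tensor_uc _ _).trans hcolor)
    ((tensor_lc _ _).trans hcolor) fun J => ?_).symm
  change Setoid (Fin (n + 1) ⊕ Fin (n + 1)) at J
  have hcast : ∀ i : Fin n, Fin.cast (add_comm 1 n) (Fin.natAdd 1 i) = i.succ := fun i =>
    Fin.ext (add_comm 1 i.1)
  refine (tensor_rel_le_comap_iff.trans (and_congr idRel_le_iff idRel_le_iff)).trans ?_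
  calc _ ↔ J (Sum.inl 0) (Sum.inr 0) ∧ ∀ i : Fin n, J (Sum.inl i.succ) (Sum.inr i.succ) := by
        refine and_congr Unique.forall_iff (forall_congr' fun i => ?_)
        rw [← hcast]
        rfl
    _ ↔ idRel (Fin (n + 1)) ≤ J := by rw [idRel_le_iff, Fin.forall_fin_succ]

/-- The row `Fin (n + 1)` with its first point moved behind the others. It reindexes the upper row
of a rotated partition: `rotUp` puts the new point in front, whereas bending a strand of the lower
row `Fin 1 ⊕ Y` by associativity of `⊕` puts it last. -/
def succEquivSum (n : ℕ) : Fin (n + 1) ≃ Fin n ⊕ Fin 1 :=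
  (finSuccEquiv n).trans
    ((Equiv.optionEquivSumPUnit _).trans (.sumCongr (.refl _) (.ofUnique Unit (Fin 1))))

theorem rotUp_mk {k n : ℕ} {uc : Fin k → Bool} {lc : Fin (1 + n) → Bool}
    {R : Setoid (Fin k ⊕ Fin (1 + n))} :
    rotUp ⟨k, 1 + n, uc, lc, R⟩ n (add_comm 1 n) =
      ⟨k + 1, n, Fin.cons (!lc (Fin.castAdd n 0)) uc, fun j => lc (Fin.natAdd 1 j),
        (R.comap (Sum.map id finSumFinEquiv ∘ Equiv.sumAssoc _ _ _)).comap
          (Sum.map (succEquivSum k) id)⟩ := by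
  refine ext_cast rfl rfl rfl (funext fun j => congrArg lc (Fin.ext (add_comm j.1 1))) ?_
  refine congrArg R.comap (funext fun x => ?_)
  rcases x with x | x
  · exact x.cases rfl fun _ => rfl
  · exact congrArg Sum.inr (Fin.ext (add_comm x.1 1))

theorem rotDown_mk {k l : ℕ} {uc : Fin (k + 1) → Bool} {lc : Fin l → Bool}
    {R : Setoid (Fin (k + 1) ⊕ Fin l)} :
    rotDown ⟨k + 1, l, uc, lc, R⟩ k rfl =
      ⟨k, 1 + l, fun i => uc i.succ, Fin.append (fun _ => !uc 0) lc,
        (R.comap (Sum.map (succEquivSum k).symm id)).comap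
          ((Equiv.sumAssoc _ _ _).symm ∘ Sum.map id finSumFinEquiv.symm)⟩ := by
  have hsplit : ∀ j : Fin (l + 1), finSumFinEquiv.symm (Fin.cast (add_comm l 1) j) =
      Fin.cases (Sum.inl 0) Sum.inr j := fun j =>
    (Equiv.symm_apply_eq _).2 (j.cases rfl fun i => Fin.ext (add_comm i.1 1))
  refine ext_cast rfl (add_comm l 1) rfl ?_ (congrArg R.comap (funext fun x => ?_))
  · rw [Fin.append_left_eq_cons]
    rfl
  · rcases x with x | x
    · rfl
    · refine Eq.trans ?_ (congrArg (fun y => Sum.map (succEquivSum k).symm id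
        ((Equiv.sumAssoc _ _ _).symm (Sum.inr y))) (hsplit x).symm)
      exact x.cases rfl fun _ => rfl

theorem vcomp_tensor_idPart_one (P Q : CPartition) {c : Bool} (h : P.l = Q.k + 1)
    (hc : P.lc (Fin.cast h.symm 0) = c) :
    vcomp P (tensor (idPart fun _ : Fin 1 => c) Q) (h.trans (add_comm _ _)) =
      rotDown (vcomp (rotUp P Q.k h) Q rfl) P.k rfl := by
  obtain ⟨k, l, uc, lc, R⟩ := P
  obtain ⟨n, m, uc', lc', S⟩ := Q
  obtain rfl : l = 1 + n := h.trans (add_comm _ _)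
  obtain rfl : lc (Fin.castAdd n 0) = c := hc
  simp only [idPart, tensor_mk, rotUp_mk, vcomp_mk, compRel_comap_sumMap_id_left, rotDown_mk,
    Fin.cons_zero, Fin.cons_succ, Bool.not_not]
  refine congrArg _ ((compRel_comap_tensorRel_idRel finSumFinEquiv.symm finSumFinEquiv.symm).trans
    (congrArg _ ?_))
  ext (x | x) (y | y) <;> simp [Setoid.comap_rel]

theorem rotDown_rotUp (P : CPartition) {n : ℕ} (h : P.l = n + 1) :
    rotDown (rotUp P n h) P.k rfl = P := by
  obtain ⟨k, l, uc, lc, R⟩ := P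
  dsimp only at h
  subst h
  refine ext_cast rfl rfl rfl (funext fun j => ?_) ?_
  · refine j.cases ?_ fun _ => rfl
    exact Bool.not_not _
  · refine congrArg R.comap (funext fun x => ?_)
    rcases x with x | x
    · rfl
    · exact x.cases rfl fun _ => rfl

/-! ### Through-blocks -/

theorem t_eq_blockCount (p : CPartition) :
    t p = blockCount (upperRel p.rel) (upperThrough p.rel) := by
  let F : Quotient ((upperRel p.rel).comap (Subtype.val : upperThrough p.rel → Fin p.k)) →
      {c : Quotient p.rel // p.IsThrough c} :=
    Quotient.lift (fun x =>
        ⟨⟦Sum.inl x.1⟧, ⟨x, rfl⟩, x.2.imp fun _ h => Quotient.sound (p.rel.symm' h)⟩)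
      fun _ _ h => Subtype.ext (Quotient.sound h)
  refine (Nat.card_eq_of_bijective F ⟨?_, ?_⟩).symm
  · rintro ⟨x⟩ ⟨y⟩ h
    have hblock : (⟦Sum.inl x.1⟧ : Quotient p.rel) = ⟦Sum.inl y.1⟧ := congrArg Subtype.val h
    exact Quotient.sound (Quotient.exact (s := p.rel) hblock)
  · rintro ⟨_, ⟨x, rfl⟩, y, h⟩
    exact ⟨Quotient.mk _ ⟨x, y, p.rel.symm' (Quotient.exact h)⟩, rfl⟩

theorem t_reflect (p : CPartition) : t (reflect p) = t p := by
  let e : Quotient (reflect p).rel ≃ Quotient p.rel :=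
    Quotient.congr (Equiv.sumComm _ _) fun _ _ => Iff.rfl
  refine Nat.card_congr (e.subtypeEquiv fun c => and_comm.trans (and_congr ?_ ?_)) <;>
    exact exists_congr fun _ => e.apply_eq_iff_eq.symm

theorem t_vcomp_reflect_self (p : CPartition) : t (vcomp p (reflect p) rfl) = t p := by
  obtain ⟨k, l, uc, lc, R⟩ := p
  rw [show vcomp ⟨k, l, uc, lc, R⟩ (reflect ⟨k, l, uc, lc, R⟩) rfl =
    ⟨k, k, uc, uc, compRel R (swapRel R)⟩ from vcomp_mk, t_eq_blockCount, t_eq_blockCount,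
    upperRel_compRel_swapRel_self, upperThrough_compRel_swapRel_self]

/-- `p p*` only depends on the upper row of `p` and its through-blocks, and composing with `q`
can change neither without losing a through-block. -/
theorem vcomp_vcomp_reflect_of_t_eq (p q : CPartition) (h : p.l = q.k)
    (ht : t (vcomp p q h) = t p) :
    vcomp (vcomp p q h) (reflect (vcomp p q h)) rfl = vcomp p (reflect p) rfl := by
  obtain ⟨k, l, uc, lc, R⟩ := p
  obtain ⟨l', m, uc', lc', S⟩ := q
  obtain rfl : l = l' := h
  rw [vcomp_mk, t_eq_blockCount, t_eq_blockCount] at ht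
  obtain ⟨hrel, hthrough⟩ : upperRel (compRel R S) = upperRel R ∧
      upperThrough (compRel R S) = upperThrough R :=
    eq_of_blockCount_le upperRel_le_upperRel_compRel upperThrough_compRel_subset
      (fun _ _ hxy => (mem_upperThrough_congr hxy).2) (fun _ _ => upperRel_compRel_imp) ht.ge
  have hself : compRel (compRel R S) (swapRel (compRel R S)) = compRel R (swapRel R) :=
    Setoid.ext fun _ _ => by
      rw [compRel_swapRel_self_iff, compRel_swapRel_self_iff, hrel, hthrough]
  rw [vcomp_mk]
  exact vcomp_mk.trans ((congrArg _ hself).trans vcomp_mk.symm)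

theorem equivIn_of_mem_of_t_eq {C : Set CPartition} {p c : CPartition} (hp : p.IsProjective)
    (h₁ : p.l = c.k) (h₂ : (reflect c).l = p.k) (hmem : vcomp p c h₁ ∈ C)
    (ht : t (vcomp (vcomp (reflect c) p h₂) c h₁) = t p) :
    EquivIn C p (vcomp (vcomp (reflect c) p h₂) c h₁) := by
  obtain ⟨hkl, hsq, hrefl⟩ := hp
  have hcapped : vcomp (reflect (vcomp p c h₁)) (vcomp p c h₁) rfl =
      vcomp (vcomp (reflect c) p h₂) c h₁ :=
    calc vcomp (reflect (vcomp p c h₁)) (vcomp p c h₁) rfl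
      _ = vcomp (vcomp (reflect c) p h₂) (vcomp p c h₁) hkl := by
        congr 1
        rw [reflect_vcomp]
        congr 1
      _ = vcomp (reflect c) (vcomp p (vcomp p c h₁) hkl) h₂ := vcomp_assoc ..
      _ = vcomp (reflect c) (vcomp p c h₁) h₂ := by
        refine vcomp_congr_right (Q := vcomp _ _ _) h₂ ((vcomp_assoc p p c hkl h₁).symm.trans ?_)
        congr 1
      _ = vcomp (vcomp (reflect c) p h₂) c h₁ := (vcomp_assoc ..).symm
  refine ⟨vcomp p c h₁, hmem, ?_, hcapped⟩
  have htr : t (vcomp p c h₁) = t p :=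
    calc t (vcomp p c h₁)
      _ = t (reflect (vcomp p c h₁)) := (t_reflect _).symm
      _ = t (vcomp (reflect (vcomp p c h₁)) (reflect (reflect (vcomp p c h₁))) rfl) :=
        (t_vcomp_reflect_self _).symm
      _ = t (vcomp (reflect (vcomp p c h₁)) (vcomp p c h₁) rfl) :=
        congrArg t (vcomp_congr_right rfl (reflect_reflect _))
      _ = t p := (congrArg t hcapped).trans ht
  refine (vcomp_vcomp_reflect_of_t_eq p c h₁ htr).trans (Eq.trans ?_ hsq)
  exact vcomp_congr_right rfl hrefl

/-! ### Composition with a cap -/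

/-- `Q` can be composed below the elements of `C` without leaving `C`. The cap has this property
although it may fail to lie in `C`, since only the white identity is known to lie in `C`. -/
def IsRightMultiplier (C : PartitionCategory) (Q : CPartition) : Prop :=
  ∀ P ∈ C.mem, ∀ h : P.l = Q.k, (∀ j, P.lc j = Q.uc (Fin.cast h j)) → vcomp P Q h ∈ C.mem

variable {C : PartitionCategory}

theorem IsRightMultiplier.tensor_idPart_one {Q : CPartition} (hQ : IsRightMultiplier C Q)
    (c : Bool) : IsRightMultiplier C (tensor (idPart fun _ : Fin 1 => c) Q) := by
  intro P hP h hcol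
  have hlow : P.l = Q.k + 1 := h.trans (add_comm _ _)
  have hcons : ∀ j, P.lc (Fin.cast hlow.symm j) = Fin.cons (α := fun _ => Bool) c Q.uc j := by
    intro j
    rw [hcol, tensor_uc]
    exact congrFun (Fin.append_left_eq_cons (fun _ => c) Q.uc) _
  rw [vcomp_tensor_idPart_one P Q hlow (c := c) (hcons 0)]
  exact C.rotDown_mem _ (hQ _ (C.rotUp_mem P hP _ hlow) _ fun j => hcons j.succ) _ _

theorem IsRightMultiplier.tensor_idPart {Q : CPartition} (hQ : IsRightMultiplier C Q) :
    ∀ {n : ℕ} (c : Fin n → Bool), IsRightMultiplier C (tensor (idPart c) Q)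
  | 0, c => by rwa [tensor_idPart_zero]
  | n + 1, c => by
    rw [idPart_succ, tensor_assoc]
    exact (hQ.tensor_idPart fun i => c i.succ).tensor_idPart_one (c 0)

/-- A partition in `C` absorbs a partition of `C` below the last points of its lower row: bending
all other lower points up to the upper row turns `P` into some `P'`, and `P'* P'` is absorbed
by `P'`. -/
theorem exists_mem_vcomp_tensor_idPart_eq_self {m : ℕ} (d : Fin m → Bool) :
    ∀ {n : ℕ} (c : Fin n → Bool) (P : CPartition), P ∈ C.mem → ∀ h : P.l = n + m,
      (∀ j, P.lc j = Fin.append c d (Fin.cast h j)) → ∃ σ : Setoid (Fin m ⊕ Fin m),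
        ⟨m, m, d, d, σ⟩ ∈ C.mem ∧ vcomp P (tensor (idPart c) ⟨m, m, d, d, σ⟩) h = P
  | 0, c, P, hP, h, hcol => by
    obtain ⟨k, l, uc, lc, R⟩ := P
    obtain rfl : l = m := h.trans (zero_add m)
    obtain rfl : lc = d := funext fun j => (hcol j).trans
      (congrFun (Fin.append_left_nil c d rfl) (Fin.cast h j))
    refine ⟨compRel (swapRel R) R, ?_, ?_⟩
    · rw [← vcomp_mk]
      exact C.vcomp_mem _ _ rfl (C.reflect_mem _ hP) hP fun _ => rfl
    · refine (vcomp_congr_right h (tensor_idPart_zero c _)).trans ?_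
      exact vcomp_mk.trans (congrArg _ compRel_compRel_swapRel_self)
  | n + 1, c, P, hP, h, hcol => by
    have hlow : P.l = n + m + 1 := h.trans (Nat.add_right_comm n 1 m)
    have hcons : ∀ j, P.lc (Fin.cast hlow.symm j) = Fin.cons (α := fun _ => Bool)
        (c 0) (Fin.append (fun i => c i.succ) d) j := by
      intro j
      rw [hcol]
      conv_lhs => rw [← Fin.cons_self_tail c, Fin.append_cons]
      rfl
    obtain ⟨σ, hσ, hfix⟩ := exists_mem_vcomp_tensor_idPart_eq_self d (fun i => c i.succ)
      (rotUp P (n + m) hlow) (C.rotUp_mem P hP _ hlow) rfl fun j => hcons j.succ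
    refine ⟨σ, hσ, ?_⟩
    have hsplit : tensor (idPart c) ⟨m, m, d, d, σ⟩ = tensor (idPart fun _ : Fin 1 => c 0)
        (tensor (idPart fun i => c i.succ) ⟨m, m, d, d, σ⟩) := by
      rw [idPart_succ, tensor_assoc]
    refine (vcomp_congr_right h hsplit).trans ((vcomp_tensor_idPart_one P _ hlow (hcons 0)).trans
      (Eq.trans ?_ (rotDown_rotUp P hlow)))
    congr 1

theorem isRightMultiplier_tensor_idPart {b : CPartition} (hb : b ∈ C.mem) {m : ℕ}
    (d : Fin m → Bool) : IsRightMultiplier C (tensor b (idPart d)) := by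
  intro P hP h hcol
  rw [tensor_uc] at hcol
  obtain ⟨σ, hσ, hfix⟩ := exists_mem_vcomp_tensor_idPart_eq_self d b.uc P hP h hcol
  set S : CPartition := ⟨m, m, d, d, σ⟩
  have hbS : vcomp P (tensor b (idPart d)) h = vcomp P (tensor b S) h :=
    calc vcomp P (tensor b (idPart d)) h
      _ = vcomp (vcomp P (tensor (idPart b.uc) S) h) (tensor b (idPart d)) rfl := by
        congr 1
        exact hfix.symm
      _ = vcomp P (vcomp (tensor (idPart b.uc) S) (tensor b (idPart d)) rfl) h := vcomp_assoc ..
      _ = vcomp P (tensor b S) h := by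
        refine vcomp_congr_right (Q := vcomp _ _ _) h
          ((tensor_vcomp_tensor (idPart b.uc) S b (idPart d) rfl rfl).trans ?_)
        exact congrArg₂ tensor (idPart_vcomp b rfl _ fun _ => rfl)
          (vcomp_idPart S rfl _ fun _ => rfl)
  rw [hbS]
  refine C.vcomp_mem _ _ _ hP (C.tensor_mem _ _ hb hσ) ?_
  rwa [tensor_uc]

end CPartition

theorem symmetric_capping_equiv_general (C : PartitionCategory)
    (p : CPartition) (hp : p ∈ C.mem) (hproj : p.IsProjective)
    (j1 j2 : ℕ) (c1 : Fin j1 → Bool) (c2 : Fin j2 → Bool)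
    (b : CPartition) (hb : b ∈ C.mem)
    (cap : CPartition) (hcap : cap = tensor (tensor (idPart c1) b) (idPart c2))
    (h1 : p.l = cap.k) (hcol : ∀ j, p.lc j = cap.uc (Fin.cast h1 j))
    (h2 : (reflect cap).l = p.k)
    (q : CPartition) (hq : q = vcomp (vcomp (reflect cap) p h2) cap h1)
    (ht : q.t = p.t) :
    EquivIn C.mem p q := by
  have hmult : IsRightMultiplier C cap := by
    rw [hcap, tensor_assoc]
    exact (isRightMultiplier_tensor_idPart hb c2).tensor_idPart c1
  subst hq
  exact equivIn_of_mem_of_t_eq hproj h1 h2 (hmult p hp h1 hcol) ht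

/-- in a category of partitions `C`, if a projective partition `q`
is obtained from a projective partition `p ∈ C` by symmetric capping with a
one-block one-row partition `b ∈ C` (i.e. `q = cap ∘ p ∘ cap*` where
`cap = |^{⊗j₁} ⊗ b ⊗ |^{⊗j₂}`), and `t(q) = t(p)`, then `q` is equivalent to `p`
in `C` : there is `r ∈ C` with `r*r = p` and `rr* = q`. -/
theorem symmetric_capping_equiv (C : PartitionCategory)
    (p : CPartition) (hp : p ∈ C.mem) (hproj : p.IsProjective)
    (j1 j2 : ℕ) (c1 : Fin j1 → Bool) (c2 : Fin j2 → Bool)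
    (b : CPartition) (hb : b ∈ C.mem) (hbrow : b.l = 0) (hbblock : b.rel = ⊤)
    (cap : CPartition) (hcap : cap = tensor (tensor (idPart c1) b) (idPart c2))
    (h1 : p.l = cap.k) (hcol : ∀ j, p.lc j = cap.uc (Fin.cast h1 j))
    (h2 : (reflect cap).l = p.k)
    (q : CPartition) (hq : q = vcomp (vcomp (reflect cap) p h2) cap h1)
    (ht : q.t = p.t) :
    EquivIn C.mem p q :=
  symmetric_capping_equiv_general C p hp hproj j1 j2 c1 c2 b hb cap hcap h1 hcol h2 q hq ht
end

section
/- Let C be a category of noncrossing colored partitions with I(C) = ℤ \ {0} (i.e., π_k ∈ C for all k ≠ 0), and suppose π_{0⁺} ∈ C, where π_{0⁺} is the one-block projective partition on points colored white-black in each row. Then the set S(C) of equivalence classes of one-block projective partitions in C, with fusion [k]∗[k'] = [k+k'] and involution [k] ↦ [−k], is an additive group isomorphic to ℤ_s for some s ∈ {1,2,…} ∪ {∞}, i.e., S(C) is a quotient group of ℤ. -/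
open scoped Classical

open CPartition

/-- `π_k` extended to `k = 0` by the partition `π_{0⁺}`. -/
noncomputable def piZ' (k : ℤ) : CPartition := if k = 0 then pi0plus else piZ k

/-!
A one-block partition is determined by its colors, and up to rotation by the word obtained by
reading them along a single row. Cutting a word that belongs to `C` and gluing it to a rotated copy
of another one shows that these words are closed under cyclic rotation and, thanks to `π_2`, under
concatenation; hence they are closed under inserting and deleting an adjacent white-black or
black-white pair. Whether a word belongs to `C` therefore only depends on the element of the free
group on one letter that it spells, i.e. on its number of white points minus its number of black
points, and the integers so obtained form the subgroup `H`. Finally, an equivalence between two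
one-block projective partitions is itself a one-block partition, whose upper and lower rows are
those of the two projective partitions.
-/

namespace CPartition

/-! ### Words of colors -/

/-- The word read off the upper row with color word `w` once it is rotated to the lower row. -/
def dualWord (w : List Bool) : List Bool := (w.map not).reverse

@[simp]
theorem dualWord_nil : dualWord [] = [] := rfl

@[simp]
theorem dualWord_cons (c : Bool) (w : List Bool) : dualWord (c :: w) = dualWord w ++ [!c] := by
  simp [dualWord]

@[simp]
theorem dualWord_append (u v : List Bool) : dualWord (u ++ v) = dualWord v ++ dualWord u := by
  simp [dualWord]

@[simp]
theorem dualWord_dualWord (w : List Bool) : dualWord (dualWord w) = w := by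
  simp [dualWord, Function.comp_def]

/-- The degree of a color word: its number of white points minus its number of black points. -/
def degree (w : List Bool) : ℤ := w.count true - w.count false

@[simp]
theorem degree_nil : degree [] = 0 := rfl

@[simp]
theorem degree_append (u v : List Bool) : degree (u ++ v) = degree u + degree v := by
  simp only [degree, List.count_append]
  push_cast
  ring

theorem degree_cons (c : Bool) (w : List Bool) :
    degree (c :: w) = (if c then 1 else -1) + degree w := by
  rw [← List.singleton_append, degree_append]
  cases c <;> rfl

@[simp]
theorem degree_dualWord (w : List Bool) : degree (dualWord w) = -degree w := by
  induction w with
  | nil => rfl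
  | cons c w ih => cases c <;> simp [degree_cons, ih, add_comm]

theorem freeGroup_mk_eq_zpow_degree (w : List Bool) :
    FreeGroup.mk (w.map (Prod.mk ())) = FreeGroup.of () ^ degree w := by
  induction w with
  | nil => rfl
  | cons c w ih =>
    have hcons : FreeGroup.mk ((c :: w).map (Prod.mk ())) =
        FreeGroup.mk [((), c)] * FreeGroup.mk (w.map (Prod.mk ())) := by
      simp [FreeGroup.mul_mk]
    have hletter : FreeGroup.mk [((), c)] = FreeGroup.of () ^ (if c then 1 else -1 : ℤ) := by
      cases c <;> simp [FreeGroup.of, FreeGroup.invRev]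
    rw [hcons, hletter, ih, degree_cons, zpow_add]

/-- The color word of each row of `π_k`, with the convention `π_0 = π_{0⁺}` of `piZ'`. -/
def rowWord (k : ℤ) : List Bool :=
  if k = 0 then [true, false] else List.replicate k.natAbs (decide (0 < k))

theorem rowWord_ne_nil (k : ℤ) : rowWord k ≠ [] := by
  unfold rowWord
  split_ifs with hk <;> simp [hk]

theorem degree_rowWord (k : ℤ) : degree (rowWord k) = k := by
  rcases lt_trichotomy k 0 with hk | rfl | hk
  · simp [rowWord, degree, hk.ne, hk.not_gt, abs_of_neg hk, List.count_replicate]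
  · rfl
  · simp [rowWord, degree, hk.ne', hk, abs_of_pos hk, List.count_replicate]

/-! ### One-block partitions -/

/-- The partition with a single block whose rows have the color words `u` (upper) and `l`
(lower). -/
def oneBlock (u l : List Bool) : CPartition := ⟨u.length, l.length, u.get, l.get, ⊤⟩

theorem eq_oneBlock {p : CPartition} {u l : List Bool} (hrel : p.rel = ⊤)
    (hu : List.ofFn p.uc = u) (hl : List.ofFn p.lc = l) : p = oneBlock u l := by
  obtain ⟨k, m, uc, lc, rel⟩ := p
  obtain rfl : rel = ⊤ := hrel
  have hu' : (⟨k, uc⟩ : Σ n, Fin n → Bool) = ⟨u.length, u.get⟩ :=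
    List.ofFn_inj'.1 (hu.trans (List.ofFn_get u).symm)
  have hl' : (⟨m, lc⟩ : Σ n, Fin n → Bool) = ⟨l.length, l.get⟩ :=
    List.ofFn_inj'.1 (hl.trans (List.ofFn_get l).symm)
  cases hu'
  cases hl'
  rfl

theorem rotDown_oneBlock (c : Bool) (u l : List Bool) :
    rotDown (oneBlock (c :: u) l) u.length rfl = oneBlock u ((!c) :: l) :=
  eq_oneBlock rfl (List.ofFn_get u)
    (List.ofFn_succ.trans (congrArg (List.cons (!c)) (List.ofFn_get l)))

theorem rotUp_oneBlock (c : Bool) (u l : List Bool) :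
    rotUp (oneBlock u (c :: l)) l.length rfl = oneBlock ((!c) :: u) l :=
  eq_oneBlock rfl (List.ofFn_succ.trans (congrArg (List.cons (!c)) (List.ofFn_get u)))
    (List.ofFn_get l)

theorem reflect_oneBlock (u l : List Bool) : reflect (oneBlock u l) = oneBlock l u :=
  eq_oneBlock rfl (List.ofFn_get l) (List.ofFn_get u)

theorem idPart_singleton (c : Bool) : idPart (fun _ : Fin 1 => c) = oneBlock [c] [c] := by
  refine eq_oneBlock ?_ rfl rfl
  exact Setoid.eq_top_iff.2 fun _ _ => Subsingleton.elim (α := Fin 1) _ _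

theorem piZ_eq_oneBlock (k : ℤ) :
    piZ k = oneBlock (List.replicate k.natAbs (decide (0 < k)))
      (List.replicate k.natAbs (decide (0 < k))) :=
  eq_oneBlock rfl (List.ofFn_const _ _) (List.ofFn_const _ _)

theorem piZ'_eq_oneBlock (k : ℤ) : piZ' k = oneBlock (rowWord k) (rowWord k) := by
  unfold piZ' rowWord
  split_ifs
  · exact eq_oneBlock rfl rfl rfl
  · exact piZ_eq_oneBlock k

theorem exists_eq_oneBlock_of_reflect_eq {p : CPartition} (hrel : p.rel = ⊤) (hp : reflect p = p)
    (hk : 0 < p.k) : ∃ u ≠ [], p = oneBlock u u :=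
  ⟨List.ofFn p.uc, by simpa using hk.ne',
    eq_oneBlock hrel rfl (congrArg (fun q : CPartition => List.ofFn q.uc) hp)⟩

/-! ### Blocks of vertical and horizontal concatenations -/

theorem exists_vcomp_rel_eq_comap (p q : CPartition) (h : p.l = q.k) :
    ∃ s : Setoid (Fin p.k ⊕ (Fin p.l ⊕ Fin q.l)),
      p.rel ≤ s.comap (Sum.map id Sum.inl) ∧
      q.rel ≤ s.comap (fun a => Sum.inr (Sum.map (Fin.cast h.symm) id a)) ∧
      (vcomp p q h).rel = s.comap (Sum.map id Sum.inr) :=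
  ⟨Relation.EqvGen.setoid _,
    fun a b hab => Relation.EqvGen.rel _ _ (Or.inl ⟨a, b, hab, rfl, rfl⟩),
    fun a b hab => Relation.EqvGen.rel _ _ (Or.inr ⟨a, b, hab, rfl, rfl⟩), rfl⟩

theorem vcomp_rel_le {p q : CPartition} {h : p.l = q.k}
    {s : Setoid (Fin p.k ⊕ (Fin p.l ⊕ Fin q.l))}
    (hp : p.rel ≤ s.comap (Sum.map id Sum.inl))
    (hq : q.rel ≤ s.comap fun a => Sum.inr (Sum.map (Fin.cast h.symm) id a)) :
    (vcomp p q h).rel ≤ s.comap (Sum.map id Sum.inr) := by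
  intro x y hxy
  refine Setoid.eqvGen_le (s := s) ?_ hxy
  rintro _ _ (⟨a, b, hab, rfl, rfl⟩ | ⟨a, b, hab, rfl, rfl⟩)
  exacts [hp hab, hq hab]

/-- Every upper point of `p` lies in a through-block. -/
def UpperThrough (p : CPartition) : Prop := ∀ i, ∃ j, p.rel (Sum.inl i) (Sum.inr j)

theorem upperThrough_of_rel_eq_top {p : CPartition} (hrel : p.rel = ⊤) (hl : 0 < p.l) :
    p.UpperThrough :=
  fun _ => ⟨⟨0, hl⟩, Setoid.eq_top_iff.1 hrel _ _⟩

theorem upperThrough_oneBlock (u : List Bool) {l : List Bool} (hl : l ≠ []) :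
    (oneBlock u l).UpperThrough :=
  upperThrough_of_rel_eq_top rfl (List.length_pos_iff.2 hl)

theorem UpperThrough.tensor {p q : CPartition} (hp : p.UpperThrough) (hq : q.UpperThrough) :
    (tensor p q).UpperThrough := by
  intro i
  induction i using Fin.addCases with
  | left i =>
    obtain ⟨j, hj⟩ := hp i
    refine ⟨Fin.castAdd q.l j, ?_⟩
    change Sum.LiftRel _ _ (Equiv.sumSumSumComm _ _ _ _ (Sum.inl (finSumFinEquiv.symm _)))
      (Equiv.sumSumSumComm _ _ _ _ (Sum.inr (finSumFinEquiv.symm _)))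
    simpa using hj
  | right i =>
    obtain ⟨j, hj⟩ := hq i
    refine ⟨Fin.natAdd p.l j, ?_⟩
    change Sum.LiftRel _ _ (Equiv.sumSumSumComm _ _ _ _ (Sum.inl (finSumFinEquiv.symm _)))
      (Equiv.sumSumSumComm _ _ _ _ (Sum.inr (finSumFinEquiv.symm _)))
    simpa using hj

theorem UpperThrough.vcomp_rel_eq_top {p q : CPartition} {h : p.l = q.k} (hp : p.UpperThrough)
    (hq : q.rel = ⊤) : (vcomp p q h).rel = ⊤ := by
  obtain ⟨s, hps, hqs, hs⟩ := exists_vcomp_rel_eq_comap p q h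
  have hmid_low (a b : Fin p.l ⊕ Fin q.l) : s (Sum.inr a) (Sum.inr b) := by
    have hab := hqs (Setoid.eq_top_iff.1 hq (Sum.map (Fin.cast h) id a) (Sum.map (Fin.cast h) id b))
    rcases a with a | a <;> rcases b with b | b <;> exact hab
  have hup (x : Fin p.k ⊕ (Fin p.l ⊕ Fin q.l)) : ∃ a, s x (Sum.inr a) := by
    rcases x with i | a
    · obtain ⟨j, hj⟩ := hp i
      exact ⟨Sum.inl j, hps hj⟩
    · exact ⟨a, s.refl' _⟩
  rw [hs]
  refine Setoid.eq_top_iff.2 fun x y => ?_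
  obtain ⟨a, ha⟩ := hup (Sum.map id Sum.inr x)
  obtain ⟨b, hb⟩ := hup (Sum.map id Sum.inr y)
  exact s.trans' ha (s.trans' (hmid_low a b) (s.symm' hb))

theorem upperThrough_of_vcomp_rel_eq_top {p q : CPartition} {h : p.l = q.k}
    (hrel : (vcomp p q h).rel = ⊤) (hl : 0 < q.l) : p.UpperThrough := by
  let f : Fin p.k ⊕ (Fin p.l ⊕ Fin q.l) → Prop :=
    Sum.elim (fun i => ∃ j, p.rel (Sum.inl i) (Sum.inr j)) fun _ => True
  have hp : p.rel ≤ (Setoid.ker f).comap (Sum.map id Sum.inl) := by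
    rintro (a | a) (b | b) hab
    · exact propext <| exists_congr fun j => ⟨p.rel.trans' (p.rel.symm' hab), p.rel.trans' hab⟩
    · exact eq_true ⟨b, hab⟩
    · exact (eq_true ⟨a, p.rel.symm' hab⟩).symm
    · rfl
  intro i
  have hi : f (Sum.inl i) = True :=
    vcomp_rel_le hp (fun _ _ _ => rfl)
      (Setoid.eq_top_iff.1 hrel (Sum.inl i) (Sum.inr ⟨0, hl⟩))
  exact of_eq_true hi

theorem rel_eq_top_of_vcomp_reflect {r : CPartition}
    (hupper : (vcomp r (reflect r) rfl).rel = ⊤) (hlower : (vcomp (reflect r) r rfl).rel = ⊤) :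
    r.rel = ⊤ := by
  have hinl (i j : Fin r.k) : r.rel (Sum.inl i) (Sum.inl j) :=
    vcomp_rel_le (p := r) (q := reflect r) (h := rfl)
      (s := r.rel.comap (Sum.elim Sum.inl (Sum.elim Sum.inr Sum.inl)))
      (by rintro (a | a) (b | b) hab <;> exact hab)
      (by rintro (a | a) (b | b) hab <;> exact hab)
      (Setoid.eq_top_iff.1 hupper (Sum.inl i) (Sum.inl j))
  have hinr (i j : Fin r.l) : r.rel (Sum.inr i) (Sum.inr j) :=
    vcomp_rel_le (p := reflect r) (q := r) (h := rfl)
      (s := r.rel.comap (Sum.elim Sum.inr (Sum.elim Sum.inl Sum.inr)))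
      (by rintro (a | a) (b | b) hab <;> exact hab)
      (by rintro (a | a) (b | b) hab <;> exact hab)
      (Setoid.eq_top_iff.1 hlower (Sum.inl i) (Sum.inl j))
  have hmix (i : Fin r.k) (j : Fin r.l) : r.rel (Sum.inl i) (Sum.inr j) := by
    obtain ⟨j', hj'⟩ := upperThrough_of_vcomp_rel_eq_top hupper i.pos i
    exact r.rel.trans' hj' (hinr j' j)
  refine Setoid.eq_top_iff.2 ?_
  rintro (i | i) (j | j)
  exacts [hinl i j, hmix i j, r.rel.symm' (hmix j i), hinr i j]

theorem vcomp_oneBlock (u : List Bool) {m : List Bool} (l : List Bool) (hm : m ≠ []) :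
    vcomp (oneBlock u m) (oneBlock m l) rfl = oneBlock u l :=
  eq_oneBlock ((upperThrough_oneBlock u hm).vcomp_rel_eq_top rfl) (List.ofFn_get u)
    (List.ofFn_get l)

theorem equivIn_oneBlock_iff (C : Set CPartition) {u v : List Bool} (hu : u ≠ []) (hv : v ≠ []) :
    EquivIn C (oneBlock u u) (oneBlock v v) ↔ oneBlock u v ∈ C := by
  constructor
  · rintro ⟨r, hr, hupper, hlower⟩
    have hrel : r.rel = ⊤ :=
      rel_eq_top_of_vcomp_reflect (by rw [hupper]; rfl) (by rw [hlower]; rfl)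
    have huc : List.ofFn r.uc = u :=
      (congrArg (fun p : CPartition => List.ofFn p.uc) hupper).trans (List.ofFn_get u)
    have hlc : List.ofFn r.lc = v :=
      (congrArg (fun p : CPartition => List.ofFn p.uc) hlower).trans (List.ofFn_get v)
    rwa [eq_oneBlock hrel huc hlc] at hr
  · exact fun huv => ⟨oneBlock u v, huv, vcomp_oneBlock u u hv, vcomp_oneBlock v v hu⟩

theorem ofFn_tensor_uc (p q : CPartition) :
    List.ofFn (tensor p q).uc = List.ofFn p.uc ++ List.ofFn q.uc := by
  rw [← List.ofFn_fin_append]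
  congr 1
  ext i
  induction i using Fin.addCases <;> simp [tensor]

theorem ofFn_tensor_lc (p q : CPartition) :
    List.ofFn (tensor p q).lc = List.ofFn p.lc ++ List.ofFn q.lc :=
  ofFn_tensor_uc (reflect p) (reflect q)

end CPartition

/-! ### Words of a category of partitions -/

namespace PartitionCategory

variable (C : PartitionCategory)

/-- The words `w` such that the one-block partition with lower row `w` and no upper point lies
in `C`. -/
def words : Set (List Bool) := {w | oneBlock [] w ∈ C.mem}

theorem oneBlock_cons_mem_iff (c : Bool) (u l : List Bool) :
    oneBlock (c :: u) l ∈ C.mem ↔ oneBlock u ((!c) :: l) ∈ C.mem := by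
  constructor <;> intro h
  · simpa only [rotDown_oneBlock] using C.rotDown_mem _ h u.length rfl
  · simpa only [rotUp_oneBlock, Bool.not_not] using C.rotUp_mem _ h l.length rfl

theorem oneBlock_mem_iff (u l : List Bool) : oneBlock u l ∈ C.mem ↔ dualWord u ++ l ∈ C.words := by
  induction u generalizing l with
  | nil => rfl
  | cons c u ih => simp [oneBlock_cons_mem_iff, ih]

theorem oneBlock_dualWord_mem_iff (u l : List Bool) :
    oneBlock (dualWord u) l ∈ C.mem ↔ u ++ l ∈ C.words := by
  rw [oneBlock_mem_iff, dualWord_dualWord]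

variable {C}

theorem dualWord_mem_words {w : List Bool} (hw : w ∈ C.words) : dualWord w ∈ C.words := by
  have h := C.reflect_mem _ hw
  rwa [reflect_oneBlock, oneBlock_mem_iff, List.append_nil] at h

theorem oneBlock_mem_of_upperThrough {p : CPartition} {u m l : List Bool} (hp : p ∈ C.mem)
    (hthrough : p.UpperThrough) (hu : List.ofFn p.uc = u) (hm : List.ofFn p.lc = m)
    (hml : oneBlock m l ∈ C.mem) : oneBlock u l ∈ C.mem := by
  subst hu hm
  have hlen : p.l = (oneBlock (List.ofFn p.lc) l).k := List.length_ofFn.symm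
  have hcolor (j : Fin p.l) : p.lc j = (oneBlock (List.ofFn p.lc) l).uc (Fin.cast hlen j) :=
    (List.get_ofFn p.lc (Fin.cast hlen j)).symm
  have hvcomp : vcomp p (oneBlock (List.ofFn p.lc) l) hlen = oneBlock (List.ofFn p.uc) l :=
    eq_oneBlock (hthrough.vcomp_rel_eq_top rfl) rfl (List.ofFn_get l)
  exact hvcomp ▸ C.vcomp_mem _ _ hlen hp hml hcolor

theorem append_mem_words_of_dualWord {x b y : List Bool} (hb : b ≠ []) (hx : x ++ b ∈ C.words)
    (hy : dualWord b ++ y ∈ C.words) : x ++ y ∈ C.words := by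
  rw [← oneBlock_dualWord_mem_iff] at hx ⊢
  rw [← oneBlock_mem_iff] at hy
  exact oneBlock_mem_of_upperThrough hx (upperThrough_oneBlock _ hb) (List.ofFn_get _)
    (List.ofFn_get _) hy

theorem pair_mem_words (hblack : piZ (-1) ∈ C.mem) (c : Bool) : [c, !c] ∈ C.words := by
  cases c
  · simpa [idPart_singleton, oneBlock_mem_iff] using C.id_mem
  · simpa [piZ_eq_oneBlock, oneBlock_mem_iff] using hblack

/-- Only the left rotations belong to the definition of `PartitionCategory`. The rightmost point of
color `c` is moved by adding a point of color `!c` to its right on both rows, through an identity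
string, and capping off the two rightmost lower points. -/
theorem cons_mem_words (hblack : piZ (-1) ∈ C.mem) {w : List Bool} {c : Bool}
    (hw : w ++ [c] ∈ C.words) : c :: w ∈ C.words := by
  have hleft : oneBlock (dualWord w) [c] ∈ C.mem := (oneBlock_dualWord_mem_iff C w [c]).2 hw
  have hright : oneBlock [!c] [!c] ∈ C.mem :=
    (oneBlock_mem_iff C _ _).2 (by simpa using pair_mem_words hblack c)
  have hcap : oneBlock [c, !c] [] ∈ C.mem :=
    (oneBlock_mem_iff C _ _).2 (by simpa using pair_mem_words hblack c)
  have hcapped : oneBlock (dualWord w ++ [!c]) [] ∈ C.mem :=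
    oneBlock_mem_of_upperThrough (C.tensor_mem _ _ hleft hright)
      ((upperThrough_oneBlock _ (by simp)).tensor (upperThrough_oneBlock _ (by simp)))
      ((ofFn_tensor_uc _ _).trans (congrArg₂ _ (List.ofFn_get _) (List.ofFn_get _)))
      ((ofFn_tensor_lc _ _).trans (congrArg₂ _ (List.ofFn_get _) (List.ofFn_get _))) hcap
  simpa [oneBlock_mem_iff] using hcapped

theorem append_comm_mem_words (hblack : piZ (-1) ∈ C.mem) {x y : List Bool}
    (h : x ++ y ∈ C.words) : y ++ x ∈ C.words := by
  induction y using List.reverseRecOn generalizing x with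
  | nil => simpa using h
  | append_singleton y c ih =>
    have hrot : c :: (x ++ y) ∈ C.words := cons_mem_words hblack (by simpa using h)
    simpa using ih (x := c :: x) hrot

theorem nil_mem_words (hblack : piZ (-1) ∈ C.mem) : [] ∈ C.words :=
  append_mem_words_of_dualWord (x := []) (b := [true, false]) (y := []) (by simp)
    (pair_mem_words hblack true) (pair_mem_words hblack true)

theorem quadruple_mem_words (hblack : piZ (-1) ∈ C.mem) (htwo : piZ 2 ∈ C.mem) (c d : Bool) :
    [!c, c, d, !d] ∈ C.words := by
  have hbbww : [false, false, true, true] ∈ C.words := by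
    simpa [piZ_eq_oneBlock, oneBlock_mem_iff, List.replicate] using htwo
  have hbwwb : [false, true, true, false] ∈ C.words :=
    append_comm_mem_words hblack (x := [false]) hbbww
  have hwbbw : [true, false, false, true] ∈ C.words :=
    append_comm_mem_words hblack (x := [false, false, true]) hbbww
  have hbwbw : [false, true, false, true] ∈ C.words :=
    append_mem_words_of_dualWord (x := [false, true]) (b := [true, false]) (by simp) hbwwb hwbbw
  have hwbwb : [true, false, true, false] ∈ C.words :=
    append_comm_mem_words hblack (x := [false]) hbwbw
  cases c <;> cases d <;> assumption

theorem append_mem_words (hblack : piZ (-1) ∈ C.mem) (htwo : piZ 2 ∈ C.mem) {u v : List Bool}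
    (hu : u ∈ C.words) (hv : v ∈ C.words) : u ++ v ∈ C.words := by
  rcases List.eq_nil_or_concat u with rfl | ⟨u, c, rfl⟩
  · simpa using hv
  rcases v with _ | ⟨d, v⟩
  · simpa using hu
  have hcv : [!c, c, d] ++ v ∈ C.words :=
    append_mem_words_of_dualWord (b := [!d]) (by simp) (quadruple_mem_words hblack htwo c d)
      (by simpa using hv)
  have huv : u ++ ([c, d] ++ v) ∈ C.words :=
    append_mem_words_of_dualWord (b := [c]) (by simp) (by simpa using hu) hcv
  simpa using huv

theorem append_pair_append_mem_words_iff (hblack : piZ (-1) ∈ C.mem) (htwo : piZ 2 ∈ C.mem)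
    (x y : List Bool) (c : Bool) : x ++ c :: (!c) :: y ∈ C.words ↔ x ++ y ∈ C.words := by
  constructor <;> intro h
  · have hrot : (y ++ x) ++ [c, !c] ∈ C.words := by
      simpa using append_comm_mem_words hblack (x := x ++ [c, !c]) (y := y) (by simpa using h)
    have hcancel : (y ++ x) ++ [] ∈ C.words :=
      append_mem_words_of_dualWord (b := [c, !c]) (by simp) hrot
        (by simpa using pair_mem_words hblack c)
    exact append_comm_mem_words hblack (by simpa using hcancel)
  · have hpair : y ++ (x ++ [c, !c]) ∈ C.words := by
      simpa using append_mem_words hblack htwo (append_comm_mem_words hblack h)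
        (pair_mem_words hblack c)
    simpa using append_comm_mem_words hblack hpair

theorem mem_words_iff_of_degree_eq (hblack : piZ (-1) ∈ C.mem) (htwo : piZ 2 ∈ C.mem)
    {u v : List Bool} (h : degree u = degree v) : u ∈ C.words ↔ v ∈ C.words := by
  have hstep (L₁ L₂ : List (Unit × Bool)) (hL : FreeGroup.Red.Step L₁ L₂) :
      (L₁.map Prod.snd ∈ C.words) = (L₂.map Prod.snd ∈ C.words) := by
    obtain @⟨L₁, L₂, x, c⟩ := hL
    simpa using append_pair_append_mem_words_iff hblack htwo _ _ c
  have hmk : FreeGroup.mk (u.map (Prod.mk ())) = FreeGroup.mk (v.map (Prod.mk ())) := by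
    rw [freeGroup_mk_eq_zpow_degree, freeGroup_mk_eq_zpow_degree, h]
  have hwords : ((u.map (Prod.mk ())).map Prod.snd ∈ C.words) =
      ((v.map (Prod.mk ())).map Prod.snd ∈ C.words) :=
    congrArg (Quot.lift (fun L : List (Unit × Bool) => L.map Prod.snd ∈ C.words) hstep) hmk
  simpa [Function.comp_def] using hwords

/-- The subgroup `H` of `ℤ` with `S(C) = ℤ / H`: the degrees of the words of `C`. -/
def degreeSubgroup (hblack : piZ (-1) ∈ C.mem) (htwo : piZ 2 ∈ C.mem) : AddSubgroup ℤ where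
  carrier := degree '' C.words
  zero_mem' := ⟨[], nil_mem_words hblack, degree_nil⟩
  add_mem' := by
    rintro _ _ ⟨u, hu, rfl⟩ ⟨v, hv, rfl⟩
    exact ⟨u ++ v, append_mem_words hblack htwo hu hv, degree_append u v⟩
  neg_mem' := by
    rintro _ ⟨w, hw, rfl⟩
    exact ⟨dualWord w, dualWord_mem_words hw, degree_dualWord w⟩

theorem degree_mem_degreeSubgroup_iff (hblack : piZ (-1) ∈ C.mem) (htwo : piZ 2 ∈ C.mem)
    {w : List Bool} : degree w ∈ degreeSubgroup hblack htwo ↔ w ∈ C.words := by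
  constructor
  · rintro ⟨v, hv, hvw⟩
    exact (mem_words_iff_of_degree_eq hblack htwo hvw).1 hv
  · exact fun hw => ⟨w, hw, rfl⟩

theorem equivIn_oneBlock_iff_degree_sub_mem (hblack : piZ (-1) ∈ C.mem) (htwo : piZ 2 ∈ C.mem)
    {u v : List Bool} (hu : u ≠ []) (hv : v ≠ []) :
    EquivIn C.mem (oneBlock u u) (oneBlock v v) ↔
      degree u - degree v ∈ degreeSubgroup hblack htwo := by
  rw [equivIn_oneBlock_iff _ hu hv, oneBlock_mem_iff, ← degree_mem_degreeSubgroup_iff hblack htwo,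
    degree_append, degree_dualWord, neg_add_eq_sub, sub_mem_comm_iff]

end PartitionCategory

open PartitionCategory

theorem SC_is_quotient_of_Z_general (C : PartitionCategory)
    (hblack : piZ (-1) ∈ C.mem) (htwo : piZ 2 ∈ C.mem) :
    ∃ H : AddSubgroup ℤ,
      (∀ p ∈ C.mem, p.IsProjective → p.rel = ⊤ → 0 < p.k →
        ∃ k : ℤ, EquivIn C.mem p (piZ' k)) ∧
      (∀ k k' : ℤ, EquivIn C.mem (piZ' k) (piZ' k') ↔ k - k' ∈ H) := by
  refine ⟨degreeSubgroup hblack htwo, ?_, fun k k' => ?_⟩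
  · rintro p - ⟨-, -, hreflect⟩ hrel hk
    obtain ⟨u, hu, rfl⟩ := exists_eq_oneBlock_of_reflect_eq hrel hreflect hk
    refine ⟨degree u, ?_⟩
    rw [piZ'_eq_oneBlock, equivIn_oneBlock_iff_degree_sub_mem hblack htwo hu (rowWord_ne_nil _),
      degree_rowWord, sub_self]
    exact zero_mem _
  · rw [piZ'_eq_oneBlock, piZ'_eq_oneBlock,
      equivIn_oneBlock_iff_degree_sub_mem hblack htwo (rowWord_ne_nil k) (rowWord_ne_nil k'),
      degree_rowWord, degree_rowWord]

/-- if `C` is a category of noncrossing colored partitions with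
`I(C) = ℤ \ {0}` and `π_{0⁺} ∈ C`, then the set `S(C)` of equivalence classes of
one-block projective partitions of `C`, with fusion `[k]∗[k'] = [k+k']` and
involution `[k] ↦ [-k]`, is a quotient group of `ℤ`, i.e. `ℤ_s` for some
`s ∈ {1, 2, …} ∪ {∞}` : there is an additive subgroup `H ≤ ℤ` such that every
one-block projective partition of `C` is equivalent to some `π_k` (`k ∈ ℤ`,
`π_0 := π_{0⁺}`) and `π_k ∼ π_{k'}` iff `k - k' ∈ H`. -/
theorem SC_is_quotient_of_Z (C : PartitionCategory)
    (hnc : ∀ p ∈ C.mem, p.NonCrossing)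
    (hI : ∀ k : ℤ, k ≠ 0 → piZ k ∈ C.mem) (h0 : pi0plus ∈ C.mem) :
    ∃ H : AddSubgroup ℤ,
      (∀ p ∈ C.mem, p.IsProjective → p.rel = ⊤ → 0 < p.k →
        ∃ k : ℤ, EquivIn C.mem p (piZ' k)) ∧
      (∀ k k' : ℤ, EquivIn C.mem (piZ' k) (piZ' k') ↔ k - k' ∈ H) :=
  SC_is_quotient_of_Z_general C (hI (-1) (by decide)) (hI 2 (by decide))
end

section
/- Let C be a category of noncrossing colored partitions and let l ≥ 1 be the smallest positive integer such that β_l ∈ C (assuming one exists). Then every projective partition p ∈ C(k,k) with no through-blocks (t(p) = 0) is equivalent in C to β_l^{⊗m} or to β_{-l}^{⊗m} for some integer m ≥ 0 (with β_l^{⊗0} the empty partition). Consequently the group of equivalence classes of non-through projective partitions in C under ⊗ is cyclic. -/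
open scoped Classical

open CPartition

/-
A partition without through-blocks is a pair of rows, each a word of coloured letters labelled by
the blocks. The category contains `A | D` as soon as it contains `A | B` and `B' | D` with `B` and
`B'` coloured alike, so the equivalence classes only depend on the colours of the rows. Capping with
the identity removes a neighbouring pair black–white, and every row reduces to `a` white points
followed by `b` black ones.

A white row which is not a single block contains, being noncrossing, a segment meeting no other
block. Removing it gives a shorter white row, whence `l` is also the least positive length of a
white row, and the lengths of the white rows are the multiples of `l`. If black points occur, then
either a block joins the first of them to a white point, and a trace of the partition is the
identity on a black point, or a segment of black points is isolated. In both cases `l` black points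
form a row, and padding with copies of `l` white or black points turns `a` and `b` into multiples
of `l`. The black row of length `l` is one block because its dual is a white row of minimal length.
-/

/-! ### Coloured words -/

/-- A word whose letters carry a colour (`true` is white) and a label. Two rows of points with equal
labels marking the points of a block encode a partition. -/
abbrev ColoredWord (α : Type*) := List (Bool × α)

namespace ColoredWord

section Operations

variable {α β γ : Type*}

/-- The word obtained by renaming the labels and keeping the colours. -/
def relabel (f : α → β) (A : ColoredWord α) : ColoredWord β := A.map (Prod.map id f)

/-- The word read by a row after rotating it to the opposite row: order and colours are reversed. -/
def dual (A : ColoredWord α) : ColoredWord α := (A.map (Prod.map not id)).reverse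

/-- The sequence of colours of a word. -/
def colors (A : ColoredWord α) : List Bool := A.map Prod.fst

/-- The sequence of labels of a word. -/
def labels (A : ColoredWord α) : List α := A.map Prod.snd

/-- The concatenation of two words with their label sets made disjoint. -/
def juxt (A : ColoredWord α) (B : ColoredWord β) : ColoredWord (α ⊕ β) :=
  relabel Sum.inl A ++ relabel Sum.inr B

/-- The word of `n` points of colour `c` forming a single block. -/
def block (n : ℕ) (c : Bool) : ColoredWord Unit := List.replicate n (c, ())

/-- All letters of the word carry the same label. -/
def IsOneBlock (A : ColoredWord α) : Prop := ∀ a ∈ labels A, ∀ b ∈ labels A, a = b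

@[simp] lemma relabel_nil (f : α → β) : relabel f [] = [] := rfl

@[simp] lemma relabel_cons (f : α → β) (x : Bool × α) (A : ColoredWord α) :
    relabel f (x :: A) = (x.1, f x.2) :: relabel f A := rfl

@[simp] lemma relabel_append (f : α → β) (A B : ColoredWord α) :
    relabel f (A ++ B) = relabel f A ++ relabel f B := List.map_append

@[simp] lemma relabel_id (A : ColoredWord α) : relabel (fun a => a) A = A := List.map_id A

@[simp] lemma relabel_relabel (f : α → β) (g : β → γ) (A : ColoredWord α) :
    relabel g (relabel f A) = relabel (fun a => g (f a)) A := by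
  simp [relabel, Function.comp_def]

@[simp] lemma length_relabel (f : α → β) (A : ColoredWord α) : (relabel f A).length = A.length :=
  List.length_map _

@[simp] lemma dual_nil : dual ([] : ColoredWord α) = [] := rfl

@[simp] lemma dual_cons (x : Bool × α) (A : ColoredWord α) :
    dual (x :: A) = dual A ++ [(!x.1, x.2)] := by simp [dual, Prod.map]

@[simp] lemma dual_append (A B : ColoredWord α) : dual (A ++ B) = dual B ++ dual A := by
  simp [dual]

@[simp] lemma dual_dual (A : ColoredWord α) : dual (dual A) = A := by
  simp [dual, Function.comp_def, Prod.map]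

@[simp] lemma dual_relabel (f : α → β) (A : ColoredWord α) :
    dual (relabel f A) = relabel f (dual A) := by
  simp [relabel, dual, Function.comp_def, Prod.map]

@[simp] lemma colors_nil : colors ([] : ColoredWord α) = [] := rfl

@[simp] lemma colors_cons (x : Bool × α) (A : ColoredWord α) :
    colors (x :: A) = x.1 :: colors A := rfl

@[simp] lemma colors_append (A B : ColoredWord α) : colors (A ++ B) = colors A ++ colors B :=
  List.map_append

@[simp] lemma colors_relabel (f : α → β) (A : ColoredWord α) : colors (relabel f A) = colors A := by
  simp [colors, relabel, Function.comp_def]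

@[simp] lemma colors_dual (A : ColoredWord α) :
    colors (dual A) = ((colors A).map not).reverse := by
  simp [colors, dual, Function.comp_def]

@[simp] lemma length_colors (A : ColoredWord α) : (colors A).length = A.length :=
  List.length_map _

@[simp] lemma colors_juxt (A : ColoredWord α) (B : ColoredWord β) :
    colors (juxt A B) = colors A ++ colors B := by simp [juxt]

@[simp] lemma colors_block (n : ℕ) (c : Bool) : colors (block n c) = List.replicate n c := by
  simp [colors, block]

@[simp] lemma labels_nil : labels ([] : ColoredWord α) = [] := rfl

@[simp] lemma labels_cons (x : Bool × α) (A : ColoredWord α) :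
    labels (x :: A) = x.2 :: labels A := rfl

@[simp] lemma labels_append (A B : ColoredWord α) : labels (A ++ B) = labels A ++ labels B :=
  List.map_append

@[simp] lemma labels_relabel (f : α → β) (A : ColoredWord α) :
    labels (relabel f A) = (labels A).map f := by simp [labels, relabel]

@[simp] lemma labels_dual (A : ColoredWord α) : labels (dual A) = (labels A).reverse := by
  simp [labels, dual, Function.comp_def]

@[simp] lemma length_labels (A : ColoredWord α) : (labels A).length = A.length :=
  List.length_map _

lemma exists_cons_of_colors_eq {A : ColoredWord α} {c : Bool} {cs : List Bool}
    (h : colors A = c :: cs) : ∃ a B, A = (c, a) :: B ∧ colors B = cs := by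
  obtain ⟨⟨_, a⟩, B, rfl, rfl, hB⟩ := List.map_eq_cons_iff.1 h
  exact ⟨a, B, rfl, hB⟩

lemma exists_append_of_colors_eq {A : ColoredWord α} {cs ds : List Bool}
    (h : colors A = cs ++ ds) : ∃ B D, A = B ++ D ∧ colors B = cs ∧ colors D = ds :=
  List.map_eq_append_iff.1 h

lemma mem_labels_of_mem_labels_relabel {f : α → β} {g : β → α} (hgf : Function.LeftInverse g f)
    {A : ColoredWord α} {b : β} (hb : b ∈ labels (relabel f A)) : g b ∈ labels A := by
  obtain ⟨a, ha, rfl⟩ := List.mem_map.1 (labels_relabel f A ▸ hb)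
  rwa [hgf a]

lemma relabel_congr {f g : α → β} {A : ColoredWord α} (h : ∀ a ∈ labels A, f a = g a) :
    relabel f A = relabel g A :=
  List.map_congr_left fun x hx => by simp [Prod.map, h x.2 (List.mem_map_of_mem hx)]

lemma eq_of_relabel_eq {f g : α → β} {A : ColoredWord α} (h : relabel f A = relabel g A) :
    ∀ a ∈ labels A, f a = g a := by
  intro a ha
  obtain ⟨x, hx, rfl⟩ := List.mem_map.1 ha
  exact congrArg Prod.snd (List.map_inj_left.1 h x hx)

lemma relabel_eq_relabel_iff {f : α → γ} {g : β → γ} {X : ColoredWord α} {Y : ColoredWord β} :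
    relabel f X = relabel g Y ↔
      colors X = colors Y ∧ ∀ p ∈ List.zip (labels X) (labels Y), f p.1 = g p.2 := by
  induction X generalizing Y with
  | nil => cases Y <;> simp
  | cons x X ih => cases Y <;> simp [ih, and_assoc, and_left_comm]

lemma IsOneBlock.injOn {A : ColoredWord α} (hA : IsOneBlock A) (f : α → β) :
    Set.InjOn f {a | a ∈ labels A} :=
  fun a ha b hb _ => hA a ha b hb

lemma relabel_unit_eq_block {A : ColoredWord α} {n : ℕ} {c : Bool}
    (hA : colors A = List.replicate n c) : relabel (fun _ => ()) A = block n c := by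
  change List.map (fun x => (x.1, ())) A = _
  simpa [block, colors, Function.comp_def] using congrArg (List.map fun d => (d, ())) hA

lemma colors_eq_of_forall_eq {A : ColoredWord α} {B : ColoredWord β} {c : Bool}
    (hA : ∀ d ∈ colors A, d = c) (hB : ∀ d ∈ colors B, d = c) (hlen : A.length = B.length) :
    colors A = colors B :=
  (List.eq_replicate_iff.2 ⟨length_colors A, hA⟩).trans
    (List.eq_replicate_iff.2 ⟨(length_colors B).trans hlen.symm, hB⟩).symm

end Operations

section Gluing

universe u v

variable {α : Type u} {β : Type v} {γ : Type*}

/-- The maps `g₁`, `g₂` identify the labels of `X` with those of `X'` letter by letter and make no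
further identification between labels in `s` and `t`. The second condition is the universal property
of the pushout, tested on predicates. -/
structure IsGluing (X : ColoredWord α) (X' : ColoredWord β) (s : Set α) (t : Set β)
    (g₁ : α → γ) (g₂ : β → γ) : Prop where
  relabel_eq : relabel g₁ X = relabel g₂ X'
  exists_desc : ∀ (h₁ : α → Prop) (h₂ : β → Prop), relabel h₁ X = relabel h₂ X' →
    ∃ k : γ → Prop, (∀ a ∈ s, k (g₁ a) = h₁ a) ∧ ∀ b ∈ t, k (g₂ b) = h₂ b

lemma IsGluing.colors_eq {X : ColoredWord α} {X' : ColoredWord β} {s : Set α} {t : Set β}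
    {g₁ : α → γ} {g₂ : β → γ} (h : IsGluing X X' s t g₁ g₂) : colors X = colors X' :=
  (relabel_eq_relabel_iff.1 h.relabel_eq).1

lemma IsGluing.eq_of_notMem_labels {X : ColoredWord α} {X' : ColoredWord β} {g₁ : α → γ}
    {g₂ : β → γ} (h : IsGluing X X' Set.univ Set.univ g₁ g₂) {b : β} (hb : b ∉ labels X') :
    (∀ a, g₁ a ≠ g₂ b) ∧ ∀ b', g₂ b' = g₂ b → b' = b := by
  obtain ⟨k, hk₁, hk₂⟩ := h.exists_desc (fun _ => False) (· = b) <|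
    relabel_eq_relabel_iff.2 ⟨h.colors_eq, fun p hp =>
      (eq_false fun hpb : p.2 = b => hb (hpb ▸ (List.of_mem_zip hp).2)).symm⟩
  have hkb : k (g₂ b) := (hk₂ b trivial).mpr rfl
  exact ⟨fun a ha => (hk₁ a trivial).mp (ha ▸ hkb), fun b' hb' => (hk₂ b' trivial).mp (hb' ▸ hkb)⟩

protected lemma IsGluing.dual {X : ColoredWord α} {X' : ColoredWord β} {s : Set α} {t : Set β}
    {g₁ : α → γ} {g₂ : β → γ} (h : IsGluing X X' s t g₁ g₂) :
    IsGluing (dual X) (dual X') s t g₁ g₂ where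
  relabel_eq := by simpa using congrArg dual h.relabel_eq
  exists_desc h₁ h₂ hh := h.exists_desc h₁ h₂ (by simpa using congrArg dual hh)

protected lemma IsGluing.juxt {α' β' γ' : Type*} {X : ColoredWord α} {X' : ColoredWord β}
    {Z : ColoredWord α'} {Z' : ColoredWord β'} {g₁ : α → γ} {g₂ : β → γ} {f₁ : α' → γ'}
    {f₂ : β' → γ'} (hX : IsGluing X X' Set.univ Set.univ g₁ g₂)
    (hZ : IsGluing Z Z' Set.univ Set.univ f₁ f₂) :
    IsGluing (juxt X Z) (juxt X' Z') Set.univ Set.univ (Sum.map g₁ f₁) (Sum.map g₂ f₂) where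
  relabel_eq := by
    simpa [juxt] using congrArg₂ juxt hX.relabel_eq hZ.relabel_eq
  exists_desc h₁ h₂ hh := by
    simp only [juxt, relabel_append, relabel_relabel] at hh
    obtain ⟨hhX, hhZ⟩ := List.append_inj hh
      (by simpa only [length_relabel, length_colors] using congrArg List.length hX.colors_eq)
    obtain ⟨k, hk₁, hk₂⟩ := hX.exists_desc _ _ hhX
    obtain ⟨k', hk'₁, hk'₂⟩ := hZ.exists_desc _ _ hhZ
    exact ⟨Sum.elim k k',
      Sum.rec (fun a _ => hk₁ a trivial) fun a _ => hk'₁ a trivial,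
      Sum.rec (fun b _ => hk₂ b trivial) fun b _ => hk'₂ b trivial⟩

lemma exists_isGluing {X : ColoredWord α} {X' : ColoredWord β} (h : colors X = colors X') :
    ∃ (γ : Type (max u v)) (g₁ : α → γ) (g₂ : β → γ),
      IsGluing X X' Set.univ Set.univ g₁ g₂ := by
  let r (x y : α ⊕ β) : Prop :=
    ∃ p ∈ List.zip (labels X) (labels X'), x = Sum.inl p.1 ∧ y = Sum.inr p.2
  refine ⟨Quot r, Quot.mk r ∘ Sum.inl, Quot.mk r ∘ Sum.inr,
    relabel_eq_relabel_iff.2 ⟨h, fun p hp => Quot.sound ⟨p, hp, rfl, rfl⟩⟩, fun h₁ h₂ hh => ?_⟩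
  refine ⟨Quot.lift (Sum.elim h₁ h₂) ?_, fun _ _ => rfl, fun _ _ => rfl⟩
  rintro _ _ ⟨p, hp, rfl, rfl⟩
  exact (relabel_eq_relabel_iff.1 hh).2 p hp

lemma relabel_eq_relabel_iff_get {f : α → γ} {g : β → γ} {X : ColoredWord α} {Y : ColoredWord β} :
    relabel f X = relabel g Y ↔ colors X = colors Y ∧
      ∀ (i : Fin X.length) (j : Fin Y.length), (i : ℕ) = j → f (X.get i).2 = g (Y.get j).2 := by
  rw [relabel_eq_relabel_iff]
  refine and_congr_right fun _ => ⟨fun h i j hij => ?_, fun h => ?_⟩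
  · refine h ((X.get i).2, (Y.get j).2) (List.mem_iff_getElem.2 ⟨i, by simp; omega, ?_⟩)
    simp [labels, hij]
  · intro p hp
    obtain ⟨i, hi, rfl⟩ := List.mem_iff_getElem.1 hp
    simp only [List.length_zip, length_labels, lt_min_iff] at hi
    simpa [labels] using h ⟨i, hi.1⟩ ⟨i, hi.2⟩ rfl

end Gluing

end ColoredWord

namespace CPartition

section Words

open ColoredWord

variable {α β γ : Type*}

/-- The label of a point of the two-row picture with upper row `A` and lower row `B`. -/
def pointLabel (A B : ColoredWord α) : Fin A.length ⊕ Fin B.length → α :=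
  Sum.elim (fun i => (A.get i).2) (fun j => (B.get j).2)

/-- The partition with upper row `A` and lower row `B` whose blocks are the fibres of the labels. -/
def ofWords (A B : ColoredWord α) : CPartition where
  k := A.length
  l := B.length
  uc i := (A.get i).1
  lc j := (B.get j).1
  rel := Setoid.ker (pointLabel A B)

lemma ext_of_rel_iff {p q : CPartition} (hk : p.k = q.k) (hl : p.l = q.l)
    (hu : ∀ i, p.uc i = q.uc (Fin.cast hk i)) (hlc : ∀ i, p.lc i = q.lc (Fin.cast hl i))
    (hr : ∀ x y, p.rel.r x y ↔ q.rel.r (Sum.map (Fin.cast hk) (Fin.cast hl) x)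
      (Sum.map (Fin.cast hk) (Fin.cast hl) y)) : p = q := by
  obtain ⟨k, l, uc, lc, rel⟩ := p
  obtain ⟨k', l', uc', lc', rel'⟩ := q
  obtain rfl : k = k' := hk
  obtain rfl : l = l' := hl
  obtain rfl : uc = uc' := funext hu
  obtain rfl : lc = lc' := funext hlc
  obtain rfl : rel = rel' := Setoid.ext fun x y => by simpa using hr x y
  rfl

lemma eq_ofWords {p : CPartition} {A B : ColoredWord γ} (φ : Fin p.k ⊕ Fin p.l → γ)
    (hA : List.ofFn (fun i => (p.uc i, φ (Sum.inl i))) = A)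
    (hB : List.ofFn (fun j => (p.lc j, φ (Sum.inr j))) = B)
    (hr : ∀ x y, p.rel.r x y ↔ φ x = φ y) : p = ofWords A B := by
  subst hA hB
  have hk := (List.length_ofFn (f := fun i => (p.uc i, φ (Sum.inl i)))).symm
  have hl := (List.length_ofFn (f := fun j => (p.lc j, φ (Sum.inr j)))).symm
  refine ext_of_rel_iff hk hl (fun i => by simp [ofWords]) (fun i => by simp [ofWords]) ?_
  have key (x : Fin p.k ⊕ Fin p.l) :
      pointLabel _ _ (Sum.map (Fin.cast hk) (Fin.cast hl) x) = φ x := by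
    rcases x with i | j <;> simp [pointLabel]
  intro x y
  rw [hr, ← key x, ← key y]
  rfl

lemma ofFn_relabel_get (f : α → β) (A : ColoredWord α) :
    List.ofFn (fun i => ((A.get i).1, f (A.get i).2)) = relabel f A :=
  (List.map_ofFn (f := A.get) (g := Prod.map id f)).symm.trans
    (congrArg (relabel f) (List.ofFn_get A))

lemma pointLabel_mem (A B : ColoredWord α) (x : Fin A.length ⊕ Fin B.length) :
    pointLabel A B x ∈ labels (A ++ B) := by
  rw [labels_append, List.mem_append]
  rcases x with i | j
  · exact Or.inl (List.mem_map_of_mem (A.get_mem i))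
  · exact Or.inr (List.mem_map_of_mem (B.get_mem j))

lemma ofWords_relabel {f : α → β} {A B : ColoredWord α}
    (hf : Set.InjOn f {a | a ∈ labels (A ++ B)}) :
    ofWords (relabel f A) (relabel f B) = ofWords A B :=
  (eq_ofWords (p := ofWords A B) (fun x => f (pointLabel A B x)) (ofFn_relabel_get f A)
    (ofFn_relabel_get f B) fun x y =>
      (hf.eq_iff (pointLabel_mem A B x) (pointLabel_mem A B y)).symm).symm

lemma reflect_ofWords (A B : ColoredWord α) : reflect (ofWords A B) = ofWords B A := by
  refine ext_of_rel_iff rfl rfl (fun _ => rfl) (fun _ => rfl) ?_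
  rintro (i | i) (j | j) <;> exact Iff.rfl

lemma rotDown_ofWords (x : Bool × α) (A B : ColoredWord α) :
    rotDown (ofWords (x :: A) B) A.length rfl = ofWords A ((!x.1, x.2) :: B) := by
  let origin : Fin A.length ⊕ Fin (B.length + 1) → Fin (A.length + 1) ⊕ Fin B.length :=
    Sum.elim (fun i => Sum.inl i.succ) fun j => Fin.cases (Sum.inl 0) (fun j' => Sum.inr j') j
  exact eq_ofWords (fun z => pointLabel (x :: A) B (origin z)) (List.ofFn_get A)
    (List.ofFn_succ.trans (congrArg (_ :: ·) (List.ofFn_get B))) fun _ _ => Iff.rfl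

lemma rotUp_ofWords (x : Bool × α) (A B : ColoredWord α) :
    rotUp (ofWords A (x :: B)) B.length rfl = ofWords ((!x.1, x.2) :: A) B := by
  let origin : Fin (A.length + 1) ⊕ Fin B.length → Fin A.length ⊕ Fin (B.length + 1) :=
    Sum.elim (fun i => Fin.cases (Sum.inr 0) (fun i' => Sum.inl i') i) fun j => Sum.inr j.succ
  exact eq_ofWords (fun z => pointLabel A (x :: B) (origin z))
    (List.ofFn_succ.trans (congrArg (_ :: ·) (List.ofFn_get A))) (List.ofFn_get B)
    fun _ _ => Iff.rfl

lemma sumSetoid_ker {δ : Type*} (f : α → γ) (g : β → δ) (x y : α ⊕ β) :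
    (sumSetoid (Setoid.ker f) (Setoid.ker g)).r x y ↔ Sum.map f g x = Sum.map f g y := by
  change Sum.LiftRel (fun a b => f a = f b) (fun a b => g a = g b) x y ↔ _
  rcases x with u | u <;> rcases y with v | v <;> simp

lemma tensor_ofWords (A B : ColoredWord α) (A' B' : ColoredWord β) :
    tensor (ofWords A B) (ofWords A' B') = ofWords (juxt A A') (juxt B B') := by
  let split (x : Fin (A.length + A'.length) ⊕ Fin (B.length + B'.length)) :
      (Fin A.length ⊕ Fin B.length) ⊕ (Fin A'.length ⊕ Fin B'.length) :=
    Equiv.sumSumSumComm _ _ _ _ (Sum.map finSumFinEquiv.symm finSumFinEquiv.symm x)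
  have hleft (m n : ℕ) (i : Fin m) :
      finSumFinEquiv.symm (Fin.castLE (Nat.le_add_right m n) i) = Sum.inl i :=
    finSumFinEquiv_symm_apply_castAdd i
  refine eq_ofWords (fun x => Sum.map (pointLabel A B) (pointLabel A' B') (split x)) ?_ ?_
    fun x y => sumSetoid_ker _ _ (split x) (split y)
  · rw [juxt, ← ofFn_relabel_get, ← ofFn_relabel_get]
    exact List.ofFn_add.trans (by simp [split, tensor, ofWords, pointLabel, hleft])
  · rw [juxt, ← ofFn_relabel_get, ← ofFn_relabel_get]
    exact List.ofFn_add.trans (by simp [split, tensor, ofWords, pointLabel, hleft])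

lemma vcomp_rel_iff (p q : CPartition) (h : p.l = q.k) (x y : Fin p.k ⊕ Fin q.l) :
    (vcomp p q h).rel.r x y ↔
      ∀ (f : Fin p.k ⊕ Fin p.l → Prop) (g : Fin q.k ⊕ Fin q.l → Prop),
        (∀ a b, p.rel.r a b → f a = f b) → (∀ a b, q.rel.r a b → g a = g b) →
        (∀ j, f (Sum.inr j) = g (Sum.inl (Fin.cast h j))) →
        Sum.elim (f ∘ Sum.inl) (g ∘ Sum.inr) x = Sum.elim (f ∘ Sum.inl) (g ∘ Sum.inr) y := by
  constructor
  · intro hxy f g hf hg hfg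
    let F : Fin p.k ⊕ (Fin p.l ⊕ Fin q.l) → Prop :=
      Sum.elim (f ∘ Sum.inl) (Sum.elim (f ∘ Sum.inr) (g ∘ Sum.inr))
    have hFp : ∀ a, F (Sum.map id Sum.inl a) = f a := by rintro (i | j) <;> rfl
    have hFq : ∀ a, F (Sum.inr (Sum.map (Fin.cast h.symm) id a)) = g a := by
      rintro (i | j)
      · exact hfg _
      · rfl
    have hF : ∀ z, F (Sum.map id Sum.inr z) = Sum.elim (f ∘ Sum.inl) (g ∘ Sum.inr) z := by
      rintro (i | j) <;> rfl
    rw [← hF, ← hF]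
    refine Setoid.eqvGen_le (s := Setoid.ker F) ?_ hxy
    rintro _ _ (⟨a, b, hab, rfl, rfl⟩ | ⟨a, b, hab, rfl, rfl⟩)
    · exact (hFp a).trans ((hf a b hab).trans (hFp b).symm)
    · exact (hFq a).trans ((hg a b hab).trans (hFq b).symm)
  · intro hfg
    let E := Relation.EqvGen.setoid (fun x y : Fin p.k ⊕ (Fin p.l ⊕ Fin q.l) =>
      (∃ a b, p.rel.r a b ∧ Sum.map id Sum.inl a = x ∧ Sum.map id Sum.inl b = y) ∨
      (∃ a b, q.rel.r a b ∧
        Sum.inr (Sum.map (Fin.cast h.symm) id a) = x ∧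
        Sum.inr (Sum.map (Fin.cast h.symm) id b) = y))
    let inClass (z : Fin p.k ⊕ (Fin p.l ⊕ Fin q.l)) : Prop := E.r (Sum.map id Sum.inr x) z
    have hcongr {u v} (huv : E.r u v) : inClass u = inClass v :=
      propext ⟨fun hu => E.trans hu huv, fun hv => E.trans hv (E.symm huv)⟩
    have key := hfg (fun a => inClass (Sum.map id Sum.inl a))
      (fun b => inClass (Sum.inr (Sum.map (Fin.cast h.symm) id b)))
      (fun a b hab => hcongr (.rel _ _ (.inl ⟨a, b, hab, rfl, rfl⟩)))
      (fun a b hab => hcongr (.rel _ _ (.inr ⟨a, b, hab, rfl, rfl⟩))) (fun _ => rfl)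
    have hclass : ∀ z, Sum.elim ((fun a => inClass (Sum.map id Sum.inl a)) ∘ Sum.inl)
        ((fun b => inClass (Sum.inr (Sum.map (Fin.cast h.symm) id b))) ∘ Sum.inr) z =
        inClass (Sum.map id Sum.inr z) := by
      rintro (i | j) <;> rfl
    rw [hclass, hclass] at key
    exact key.mp (E.refl _)

lemma vcomp_ofWords {A B : ColoredWord α} {B' D : ColoredWord β} {g₁ : α → γ} {g₂ : β → γ}
    (hg : IsGluing B B' {a | a ∈ labels A} {b | b ∈ labels D} g₁ g₂)
    (h : (ofWords A B).l = (ofWords B' D).k) :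
    vcomp (ofWords A B) (ofWords B' D) h = ofWords (relabel g₁ A) (relabel g₂ D) := by
  let φ : Fin A.length ⊕ Fin D.length → γ :=
    Sum.elim (fun i => g₁ (A.get i).2) fun j => g₂ (D.get j).2
  refine eq_ofWords φ (ofFn_relabel_get g₁ A) (ofFn_relabel_get g₂ D) fun x y =>
    (vcomp_rel_iff _ _ h x y).trans ⟨fun hxy => ?_, fun hxy f f' hf hf' hff' => ?_⟩
  · have key := hxy (fun a => g₁ (pointLabel A B a) = φ y) (fun b => g₂ (pointLabel B' D b) = φ y)
      (fun a b hab => congrArg (g₁ · = φ y) hab) (fun a b hab => congrArg (g₂ · = φ y) hab)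
      fun j => congrArg (· = φ y) ((relabel_eq_relabel_iff_get.1 hg.relabel_eq).2 j _ rfl)
    have hφ : ∀ z, Sum.elim ((fun a => g₁ (pointLabel A B a) = φ y) ∘ Sum.inl)
        ((fun b => g₂ (pointLabel B' D b) = φ y) ∘ Sum.inr) z = (φ z = φ y) := by
      rintro (i | j) <;> rfl
    exact (hφ x).mp (key.mpr ((hφ y).mpr rfl))
  · obtain ⟨h₁, rfl⟩ := (Function.factorsThrough_iff f).1 hf
    obtain ⟨h₂, rfl⟩ := (Function.factorsThrough_iff f').1 hf'
    obtain ⟨k, hk₁, hk₂⟩ := hg.exists_desc h₁ h₂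
      (relabel_eq_relabel_iff_get.2 ⟨hg.colors_eq, fun i j hij =>
        (hff' i).trans (congrArg (fun j => h₂ (B'.get j).2) (Fin.ext hij))⟩)
    have hk : ∀ z, Sum.elim ((h₁ ∘ pointLabel A B) ∘ Sum.inl) ((h₂ ∘ pointLabel B' D) ∘ Sum.inr) z =
        k (φ z) := by
      rintro (i | j)
      · exact (hk₁ _ (List.mem_map_of_mem (A.get_mem i))).symm
      · exact (hk₂ _ (List.mem_map_of_mem (D.get_mem j))).symm
    exact (hk x).trans ((congrArg k hxy).trans (hk y).symm)

end Words

end CPartition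

/-! ### Categories of partitions as sets of words -/

namespace PartitionCategory

open ColoredWord

universe u

section Words

variable {C : PartitionCategory} {α β γ : Type*}

/-- The partition with empty upper row and lower row `w` lies in `C`. By rotation, such words
describe all of `C`. -/
def HasWord (C : PartitionCategory) (w : ColoredWord α) : Prop := ofWords [] w ∈ C.mem

/-- The identity partition on a point of colour `c` lies in `C`, seen on one row. -/
def HasId (C : PartitionCategory) (c : Bool) : Prop := C.HasWord [(!c, ()), (c, ())]

lemma ofWords_mem_iff {A B : ColoredWord α} :
    ofWords A B ∈ C.mem ↔ C.HasWord (dual A ++ B) := by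
  induction A generalizing B with
  | nil => rfl
  | cons x A ih =>
    have hword : dual (x :: A) ++ B = dual A ++ (!x.1, x.2) :: B := by simp
    rw [hword, ← ih]
    constructor
    · intro h
      simpa only [rotDown_ofWords] using C.rotDown_mem _ h A.length rfl
    · intro h
      simpa only [rotUp_ofWords, Bool.not_not] using C.rotUp_mem _ h B.length rfl

lemma reflect_ofWords_mem {A B : ColoredWord α} (h : ofWords A B ∈ C.mem) :
    ofWords B A ∈ C.mem := by
  simpa only [reflect_ofWords] using C.reflect_mem _ h

lemma tensor_ofWords_mem {A B : ColoredWord α} {A' B' : ColoredWord β} (h : ofWords A B ∈ C.mem)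
    (h' : ofWords A' B' ∈ C.mem) : ofWords (juxt A A') (juxt B B') ∈ C.mem := by
  simpa only [tensor_ofWords] using C.tensor_mem _ _ h h'

lemma vcomp_ofWords_mem {A B : ColoredWord α} {B' D : ColoredWord β} {g₁ : α → γ} {g₂ : β → γ}
    (h : ofWords A B ∈ C.mem) (h' : ofWords B' D ∈ C.mem)
    (hg : IsGluing B B' {a | a ∈ labels A} {b | b ∈ labels D} g₁ g₂) :
    ofWords (relabel g₁ A) (relabel g₂ D) ∈ C.mem := by
  have hlen : B.length = B'.length := by
    simpa only [length_colors] using congrArg List.length hg.colors_eq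
  have hcol (j : Fin B.length) : (B.get j).1 = (B'.get (Fin.cast hlen j)).1 := by
    simpa [colors] using List.getElem_of_eq hg.colors_eq (i := j) (by simp)
  rw [← vcomp_ofWords hg hlen]
  exact C.vcomp_mem _ _ hlen h h' hcol

lemma hasWord_relabel_iff {w : ColoredWord α} {f : α → β} (hf : Set.InjOn f {a | a ∈ labels w}) :
    C.HasWord (relabel f w) ↔ C.HasWord w := by
  unfold HasWord
  rw [← ofWords_relabel (A := []) (B := w) hf, relabel_nil]

protected lemma HasWord.dual {w : ColoredWord α} (h : C.HasWord w) : C.HasWord (dual w) := by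
  simpa using ofWords_mem_iff.1 (reflect_ofWords_mem h)

variable (C) in
lemma hasId_true : C.HasId true := by
  have hid : idPart (fun _ : Fin 1 => true) = ofWords [(true, ())] [(true, ())] :=
    eq_ofWords (fun _ => ()) rfl rfl fun x y =>
      iff_of_true (Subsingleton.elim (α := Fin 1) _ _) rfl
  exact ofWords_mem_iff.1 (hid ▸ C.id_mem)

variable (C) in
lemma hasWord_nil : C.HasWord ([] : ColoredWord Unit) :=
  vcomp_ofWords_mem (g₁ := id) (g₂ := id) C.hasId_true (reflect_ofWords_mem C.hasId_true)
    ⟨rfl, fun _ _ _ => ⟨fun _ => True, by simp, by simp⟩⟩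

lemma HasWord.insert {u v : ColoredWord α} {x : ColoredWord β} (huv : C.HasWord (u ++ v))
    (hx : C.HasWord x) :
    C.HasWord (relabel Sum.inr u ++ relabel Sum.inl x ++ relabel Sum.inr v) := by
  have huv' : ofWords (dual u) v ∈ C.mem := ofWords_mem_iff.2 (by simpa using huv)
  simpa [juxt] using ofWords_mem_iff.1 (tensor_ofWords_mem hx huv')

lemma copy_mem {W V : ColoredWord α} (h : C.HasWord (W ++ V)) :
    ofWords (relabel Sum.inl V)
      (relabel (fun a => if a ∈ labels W then Sum.inl a else Sum.inr a) V) ∈ C.mem := by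
  have hlower : ofWords (dual W) V ∈ C.mem := ofWords_mem_iff.2 (by simpa using h)
  refine vcomp_ofWords_mem (reflect_ofWords_mem hlower) hlower ⟨?_, fun h₁ h₂ hh => ?_⟩
  · exact relabel_congr fun a ha => by simp_all
  · refine ⟨Sum.elim h₁ h₂, fun a _ => rfl, fun a _ => ?_⟩
    by_cases ha : a ∈ labels W
    · simpa [ha] using eq_of_relabel_eq hh a (by simpa using ha)
    · simp [ha]

/-- The part `V` of the word to the right of `X` has to pass through unchanged although the identity
partitions need not be available; `copy_mem` replaces them. -/
lemma HasWord.subst {U X V : ColoredWord α} {X' Y : ColoredWord β} {g₁ : α → γ} {g₂ : β → γ}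
    (h : C.HasWord (U ++ X ++ V)) (h' : C.HasWord (dual X' ++ Y))
    (hg : IsGluing X X' Set.univ Set.univ g₁ g₂) :
    C.HasWord (relabel g₁ U ++ relabel g₂ Y ++ relabel g₁ V) := by
  have hupper : ofWords (dual U) (X ++ V) ∈ C.mem :=
    ofWords_mem_iff.2 (by simpa using h)
  have hlower := tensor_ofWords_mem (ofWords_mem_iff.2 h') (copy_mem h)
  have hglue := vcomp_ofWords_mem hupper hlower (g₁ := g₁)
    (g₂ := Sum.elim g₂ (Sum.elim g₁ g₁)) ⟨by simp [juxt, hg.relabel_eq], ?_⟩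
  · have hV : relabel (fun a => Sum.elim g₁ g₁
        (if a ∈ labels (U ++ X) then Sum.inl a else Sum.inr a)) V = relabel g₁ V :=
      relabel_congr fun a _ => by split <;> rfl
    simpa [juxt, ← hV] using ofWords_mem_iff.1 hglue
  · intro h₁ h₂ hh
    simp only [juxt, relabel_append, relabel_relabel] at hh
    obtain ⟨hX, hV⟩ := List.append_inj hh
      (by simpa only [length_relabel, length_colors] using congrArg List.length hg.colors_eq)
    obtain ⟨k, hk₁, hk₂⟩ := hg.exists_desc
      (fun a => if a ∈ labels (U ++ X) then h₁ a else h₂ (Sum.inr (Sum.inr a))) (h₂ ∘ Sum.inl)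
      ((relabel_congr fun a ha => by simp [ha]).trans hX)
    refine ⟨k, fun a ha => ?_, fun b hb => ?_⟩
    · have haU : a ∈ labels U := by simpa using ha
      simpa [haU] using hk₁ a trivial
    · simp only [juxt, labels_append, labels_relabel, Set.mem_ofPred_eq, List.mem_append,
        List.mem_map] at hb
      rcases hb with ⟨y, -, rfl⟩ | ⟨_, ⟨a, ha, rfl⟩, rfl⟩
      · exact hk₂ y trivial
      · have hka := hk₁ a trivial
        simp only [labels_append, List.mem_append] at hka
        by_cases haW : a ∈ labels U ∨ a ∈ labels X
        · have hVa : h₁ a = h₂ (Sum.inr (Sum.inl a)) :=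
            eq_of_relabel_eq (f := h₁) (g := fun a => h₂ (Sum.inr (Sum.inl a)))
              (by simpa using hV) a ha
          simpa only [if_pos haW, Sum.elim_inr, Sum.elim_inl, hVa] using hka
        · simpa only [if_neg haW, Sum.elim_inr] using hka

lemma HasWord.cap_pair {u v : ColoredWord α} {c : Bool} {a b : α} {g : α → γ}
    (h : C.HasWord (u ++ (!c, a) :: (c, b) :: v)) (hc : C.HasId c) (hab : g a = g b)
    (hg : ∀ h : α → Prop, h a = h b → ∃ k : γ → Prop, ∀ x, k (g x) = h x) :
    C.HasWord (relabel g (u ++ v)) := by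
  have h' : C.HasWord (u ++ [(!c, a), (c, b)] ++ v) := by simpa using h
  have hglue : IsGluing [(!c, a), (c, b)] [(!c, ()), (c, ())] Set.univ Set.univ g
      (fun _ => g a) := by
    refine ⟨by simp [hab], fun h₁ h₂ hh => ?_⟩
    simp only [relabel_cons, relabel_nil, List.cons.injEq, Prod.mk.injEq, true_and, and_true] at hh
    obtain ⟨k, hk⟩ := hg h₁ (hh.1.trans hh.2.symm)
    exact ⟨k, fun x _ => hk x, fun _ _ => (hk a).trans hh.1⟩
  simpa using h'.subst (Y := []) (by simpa [HasId] using hc) hglue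

lemma HasWord.rotate_letter {c : Bool} {a : α} {w : ColoredWord α} (hc : C.HasId c)
    (h : C.HasWord ((c, a) :: w)) : C.HasWord (w ++ [(c, a)]) := by
  have hins := HasWord.insert (u := [(!c, ())]) (v := [(c, ())]) hc h
  have hcap := HasWord.cap_pair (u := []) (a := Sum.inr ()) (b := Sum.inl a)
    (v := relabel Sum.inl w ++ [(c, Sum.inr ())]) (g := Sum.elim id fun _ => a)
    (by simpa using hins) hc rfl fun p hp => ⟨p ∘ Sum.inl, by
      rintro (x | _)
      · rfl
      · exact hp.symm⟩
  simpa using hcap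

lemma HasWord.rotate {x w : ColoredWord α} (hx : ∀ c ∈ colors x, C.HasId c)
    (h : C.HasWord (x ++ w)) : C.HasWord (w ++ x) := by
  induction x generalizing w with
  | nil => simpa using h
  | cons y x ih =>
    simp only [colors_cons, List.forall_mem_cons] at hx
    have hrot : C.HasWord (x ++ (w ++ [y])) := by
      simpa using HasWord.rotate_letter (w := x ++ w) hx.1 h
    simpa using ih hx.2 hrot

lemma HasWord.cap {α : Type u} {u v X₁ X₂ : ColoredWord α}
    (h : C.HasWord (u ++ dual X₁ ++ X₂ ++ v)) (hcol : colors X₁ = colors X₂)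
    (hid : ∀ c ∈ colors X₁, C.HasId c) :
    ∃ (γ : Type u) (g : α → γ), C.HasWord (relabel g (u ++ v)) ∧ relabel g X₁ = relabel g X₂ ∧
      ∀ a, a ∉ labels X₁ → a ∉ labels X₂ → ∀ b, g a = g b → a = b := by
  induction hcs : colors X₁ generalizing α X₁ with
  | nil =>
    obtain rfl : X₁ = [] := List.map_eq_nil_iff.1 hcs
    obtain rfl : X₂ = [] := List.map_eq_nil_iff.1 (hcol.symm.trans hcs)
    exact ⟨α, fun a => a, by simpa using h, rfl, fun a _ _ b hab => hab⟩
  | cons c cs ih =>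
    obtain ⟨x, X₁, rfl, rfl⟩ := exists_cons_of_colors_eq hcs
    obtain ⟨y, X₂, rfl, hcol'⟩ := exists_cons_of_colors_eq (hcol.symm.trans hcs)
    simp only [colors_cons, List.forall_mem_cons] at hid
    let r (a b : α) : Prop := a = x ∧ b = y
    have hr (a : α) (hx : a ≠ x) (hy : a ≠ y) (b : α) (hab : Quot.mk r a = Quot.mk r b) :
        a = b := by
      have hlift := congrArg (Quot.lift (a = ·) (by rintro _ _ ⟨rfl, rfl⟩; simp [hx, hy])) hab
      exact hlift.mp rfl
    have hcap : C.HasWord (relabel (Quot.mk r) (u ++ dual X₁ ++ (X₂ ++ v))) :=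
      HasWord.cap_pair (c := c) (a := x) (b := y) (by simpa using h) hid.1
        (Quot.sound ⟨rfl, rfl⟩)
        fun p hp => ⟨Quot.lift p (by rintro _ _ ⟨rfl, rfl⟩; exact hp), fun _ => rfl⟩
    obtain ⟨γ, g, hg, hgX, hgi⟩ := ih (u := relabel (Quot.mk r) u) (v := relabel (Quot.mk r) v)
      (X₁ := relabel (Quot.mk r) X₁) (X₂ := relabel (Quot.mk r) X₂) (by simpa using hcap)
      (by simpa using hcol'.symm) (by simpa using hid.2)
      (colors_relabel _ _)
    refine ⟨γ, fun a => g (Quot.mk r a), by simpa using hg, ?_, fun a hX₁ hX₂ b hab => ?_⟩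
    · simpa [Quot.sound (r := r) ⟨rfl, rfl⟩] using hgX
    · simp only [labels_cons, List.mem_cons, not_or] at hX₁ hX₂
      have hnot {X : ColoredWord α} (hX : a ∉ labels X) :
          Quot.mk r a ∉ labels (relabel (Quot.mk r) X) := by
        rw [labels_relabel, List.mem_map]
        rintro ⟨b, hb, hba⟩
        exact hX (hr a hX₁.1 hX₂.1 b hba.symm ▸ hb)
      exact hr a hX₁.1 hX₂.1 b (hgi _ (hnot hX₁.2) (hnot hX₂.2) _ hab)

end Words

end PartitionCategory

/-! ### Partitions without through-blocks -/

namespace CPartition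

open ColoredWord

variable {α β γ δ : Type*}

/-- The partition with upper row `A` and lower row `B` in which no block meets both rows. -/
def nonThrough (A : ColoredWord α) (B : ColoredWord β) : CPartition :=
  ofWords (relabel Sum.inl A) (relabel Sum.inr B)

lemma reflect_nonThrough (A : ColoredWord α) (B : ColoredWord β) :
    reflect (nonThrough A B) = nonThrough B A := by
  unfold nonThrough
  rw [reflect_ofWords, ← ofWords_relabel (f := Sum.swap) Sum.swap_leftInverse.injective.injOn]
  simp

lemma tensor_nonThrough (A : ColoredWord α) (B : ColoredWord β) (A' : ColoredWord γ)
    (B' : ColoredWord δ) :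
    tensor (nonThrough A B) (nonThrough A' B') = nonThrough (juxt A A') (juxt B B') := by
  unfold nonThrough
  rw [tensor_ofWords,
    ← ofWords_relabel (f := Equiv.sumSumSumComm α β γ δ) (Equiv.injective _).injOn]
  simp [juxt]

lemma nonThrough_relabel {f : α → γ} {g : β → δ} {A : ColoredWord α} {B : ColoredWord β}
    (hf : Set.InjOn f {a | a ∈ labels A}) (hg : Set.InjOn g {b | b ∈ labels B}) :
    nonThrough (relabel f A) (relabel g B) = nonThrough A B := by
  unfold nonThrough
  rw [← ofWords_relabel (f := Sum.map f g)]
  · simp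
  · rintro (a | b) ha (a' | b') ha' h <;> simp_all [hf.eq_iff, hg.eq_iff]

lemma isGluing_nonThrough (A : ColoredWord α) {B : ColoredWord β} {B' : ColoredWord γ}
    (D : ColoredWord δ) (hB : colors B = colors B') :
    IsGluing (relabel Sum.inr B) (relabel Sum.inl B')
      {a | a ∈ labels (relabel Sum.inl A)} {d | d ∈ labels (relabel Sum.inr D)}
      (Sum.elim (fun a : α => some (Sum.inl a)) fun _ : β => none)
      (Sum.elim (fun _ : γ => none) fun d : δ => some (Sum.inr d)) := by
  refine ⟨by simpa [relabel_eq_relabel_iff] using hB, fun h₁ h₂ _ =>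
    ⟨fun z => z.elim True (Sum.elim (h₁ ∘ Sum.inl) (h₂ ∘ Sum.inr)), ?_, ?_⟩⟩
  · rintro (a | b) ha
    · rfl
    · simp at ha
  · rintro (b | d) hd
    · simp at hd
    · rfl

lemma ofWords_some_eq_nonThrough (A : ColoredWord α) (B : ColoredWord β) :
    ofWords (relabel (fun a => some (Sum.inl a)) A) (relabel (fun b => some (Sum.inr b)) B) =
      nonThrough A B := by
  rw [nonThrough, ← ofWords_relabel (f := some) (A := relabel Sum.inl A)
    (Option.some_injective _).injOn]
  simp

lemma vcomp_nonThrough {A : ColoredWord α} {B : ColoredWord β} {B' : ColoredWord γ}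
    {D : ColoredWord δ} (hB : colors B = colors B') (h : (nonThrough A B).l = (nonThrough B' D).k) :
    vcomp (nonThrough A B) (nonThrough B' D) h = nonThrough A D := by
  refine (vcomp_ofWords (isGluing_nonThrough A D hB) h).trans ?_
  simpa using ofWords_some_eq_nonThrough A D

lemma betaP_eq_nonThrough_block (n : ℕ) (c : Bool) :
    betaP n c = nonThrough (block n c) (block n c) := by
  have hker : Setoid.ker (fun _ : Fin n => ()) = ⊤ := eq_top_iff.2 fun _ _ _ => rfl
  refine eq_ofWords (p := betaP n c) (Sum.map (fun _ => ()) fun _ => ()) ?_ ?_ fun x y => ?_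
  · simp [block, relabel, betaP]
  · simp [block, relabel, betaP]
  · have hrel := sumSetoid_ker (fun _ : Fin n => ()) (fun _ : Fin n => ()) x y
    rw [hker] at hrel
    exact hrel

lemma nonThrough_eq_betaP {n : ℕ} {c : Bool} {A : ColoredWord α}
    (hA : colors A = List.replicate n c) (hone : IsOneBlock A) : nonThrough A A = betaP n c := by
  rw [betaP_eq_nonThrough_block, ← relabel_unit_eq_block hA,
    nonThrough_relabel (hone.injOn _) (hone.injOn _)]

lemma exists_tpow_betaP_eq_nonThrough (l : ℕ) (c : Bool) (m : ℕ) :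
    ∃ (α : Type) (A : ColoredWord α),
      colors A = .replicate (m * l) c ∧ tpow (betaP l c) m = nonThrough A A := by
  induction m with
  | zero => exact ⟨Unit, [], by simp, betaP_eq_nonThrough_block 0 true⟩
  | succ m ih =>
    obtain ⟨α, A, hA, hpow⟩ := ih
    refine ⟨α ⊕ Unit, juxt A (block l c), ?_, ?_⟩
    · simp [hA, add_mul]
    · rw [tpow, hpow, betaP_eq_nonThrough_block, tensor_nonThrough]

lemma not_rel_inl_inr_of_t_eq_zero {p : CPartition} (ht : p.t = 0) (i : Fin p.k) (j : Fin p.l) :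
    ¬ p.rel.r (Sum.inl i) (Sum.inr j) := by
  intro h
  have : Finite (Quotient p.rel) := Quotient.finite _
  have hempty : IsEmpty {c : Quotient p.rel // p.IsThrough c} :=
    (Nat.card_eq_zero.1 ht).resolve_right fun hinf => hinf.not_finite inferInstance
  exact hempty.false ⟨Quotient.mk p.rel (Sum.inl i), ⟨i, rfl⟩, j, (Quotient.sound h).symm⟩

lemma IsProjective.exists_eq_nonThrough {p : CPartition} (hp : p.IsProjective) (ht : p.t = 0) :
    ∃ (α : Type) (A : ColoredWord α), p = nonThrough A A := by
  have hnt := not_rel_inl_inr_of_t_eq_zero ht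
  obtain ⟨h, -, hr⟩ := hp
  clear ht
  obtain ⟨k, l, uc, lc, rel⟩ := p
  obtain rfl : l = k := h
  simp only [reflect, CPartition.mk.injEq, heq_eq_eq, true_and] at hr
  obtain ⟨rfl, -, hrel⟩ := hr
  have hswap (x y) : rel.r x y ↔ rel.r x.swap y.swap := iff_of_eq (congrArg (·.r x y) hrel.symm)
  let label (i : Fin l) := Quotient.mk rel (Sum.inl i)
  refine ⟨Quotient rel, List.ofFn fun i => (lc i, label i),
    eq_ofWords (Sum.map label label) (by simp [relabel, Function.comp_def])
      (by simp [relabel, Function.comp_def]) ?_⟩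
  rintro (i | i) (j | j)
  · exact Quotient.eq.symm.trans Sum.inl_injective.eq_iff.symm
  · exact iff_of_false (hnt i j) Sum.inl_ne_inr
  · exact iff_of_false (fun h => hnt j i (rel.symm h)) Sum.inr_ne_inl
  · exact (hswap _ _).trans (Quotient.eq.symm.trans Sum.inr_injective.eq_iff.symm)

end CPartition

namespace PartitionCategory

open ColoredWord

variable {C : PartitionCategory} {α β γ δ : Type*}

/-- The words `A` and `B` are the two rows of a partition in `C` without through-blocks. -/
def WordEquiv (C : PartitionCategory) (A : ColoredWord α) (B : ColoredWord β) : Prop :=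
  nonThrough A B ∈ C.mem

section WordEquiv

variable {A : ColoredWord α} {B : ColoredWord β}

lemma wordEquiv_iff_hasWord : C.WordEquiv A B ↔ C.HasWord (juxt (dual A) B) := by
  rw [WordEquiv, nonThrough, ofWords_mem_iff, dual_relabel, juxt]

lemma WordEquiv.symm (h : C.WordEquiv A B) : C.WordEquiv B A := by
  simpa only [WordEquiv, reflect_nonThrough] using C.reflect_mem _ h

lemma WordEquiv.trans {B' : ColoredWord γ} {D : ColoredWord δ} (h : C.WordEquiv A B)
    (h' : C.WordEquiv B' D) (hB : colors B = colors B') : C.WordEquiv A D := by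
  simpa [WordEquiv, ofWords_some_eq_nonThrough] using
    vcomp_ofWords_mem h h' (isGluing_nonThrough A D hB)

protected lemma WordEquiv.juxt {A' : ColoredWord γ} {B' : ColoredWord δ} (h : C.WordEquiv A B)
    (h' : C.WordEquiv A' B') : C.WordEquiv (juxt A A') (juxt B B') := by
  simpa only [WordEquiv, tensor_nonThrough] using C.tensor_mem _ _ h h'

lemma wordEquiv_nil_iff_hasWord : C.WordEquiv ([] : ColoredWord α) B ↔ C.HasWord B := by
  rw [wordEquiv_iff_hasWord]
  simpa [juxt] using hasWord_relabel_iff (Sum.inr_injective (α := α)).injOn (w := B)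

end WordEquiv

/-- Some partition in `C` without through-blocks has rows coloured `cs` and `ds`. This is the
equivalence of projective partitions without through-blocks, which only depends on the colours. -/
def ColorEquiv (C : PartitionCategory) (cs ds : List Bool) : Prop :=
  ∃ (α β : Type) (A : ColoredWord α) (B : ColoredWord β),
    colors A = cs ∧ colors B = ds ∧ C.WordEquiv A B

section ColorEquiv

variable {cs ds es cs' ds' : List Bool}

lemma WordEquiv.colorEquiv {α β : Type} {A : ColoredWord α} {B : ColoredWord β}
    (h : C.WordEquiv A B) : C.ColorEquiv (colors A) (colors B) :=
  ⟨α, β, A, B, rfl, rfl, h⟩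

lemma WordEquiv.of_colorEquiv {A : ColoredWord α} {B : ColoredWord β} (hA : C.WordEquiv A A)
    (hB : C.WordEquiv B B) (h : C.ColorEquiv (colors A) (colors B)) : C.WordEquiv A B := by
  obtain ⟨_, _, G, F, hG, hF, hGF⟩ := h
  exact (hA.trans hGF hG.symm).trans hB hF

lemma ColorEquiv.symm (h : C.ColorEquiv cs ds) : C.ColorEquiv ds cs := by
  obtain ⟨_, _, A, B, rfl, rfl, h⟩ := h
  exact h.symm.colorEquiv

lemma ColorEquiv.trans (h : C.ColorEquiv cs ds) (h' : C.ColorEquiv ds es) :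
    C.ColorEquiv cs es := by
  obtain ⟨_, _, A, B, rfl, rfl, h⟩ := h
  obtain ⟨_, _, B', D, hB, rfl, h'⟩ := h'
  exact (h.trans h' hB.symm).colorEquiv

lemma ColorEquiv.append (h : C.ColorEquiv cs ds) (h' : C.ColorEquiv cs' ds') :
    C.ColorEquiv (cs ++ cs') (ds ++ ds') := by
  obtain ⟨_, _, A, B, rfl, rfl, h⟩ := h
  obtain ⟨_, _, A', B', rfl, rfl, h'⟩ := h'
  simpa using (h.juxt h').colorEquiv

variable (C) in
lemma colorEquiv_nil : C.ColorEquiv [] [] :=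
  WordEquiv.colorEquiv (wordEquiv_nil_iff_hasWord (α := Unit) (C := C).2 C.hasWord_nil)

lemma ColorEquiv.nil_dual_append (h : C.ColorEquiv cs ds) :
    C.ColorEquiv [] ((cs.map not).reverse ++ ds) := by
  obtain ⟨_, _, A, B, rfl, rfl, h⟩ := h
  simpa using (wordEquiv_nil_iff_hasWord (α := Unit).2 (wordEquiv_iff_hasWord.1 h)).colorEquiv

lemma ColorEquiv.of_append_left (h : C.ColorEquiv (cs ++ ds) (cs' ++ ds'))
    (hcs : C.ColorEquiv cs cs') : C.ColorEquiv ds ds' := by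
  obtain ⟨_, _, A, A', hA, hA', h⟩ := h
  obtain ⟨A, B, rfl, rfl, rfl⟩ := exists_append_of_colors_eq hA
  obtain ⟨A', B', rfl, rfl, rfl⟩ := exists_append_of_colors_eq hA'
  obtain ⟨_, _, G, F, hG, hF, hGF⟩ := hcs
  obtain ⟨_, a, g, hag⟩ := exists_isGluing hG.symm
  obtain ⟨_, a', f, haf⟩ := exists_isGluing hF.symm
  have hword : C.HasWord (relabel Sum.inl (dual B) ++ juxt (dual A) A' ++ relabel Sum.inr B') := by
    simpa [juxt] using wordEquiv_iff_hasWord.1 h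
  have hsubst := hword.subst (Y := []) (by simpa using (wordEquiv_iff_hasWord.1 hGF).dual)
    (hag.dual.juxt haf)
  have hBB' : C.WordEquiv (relabel a B) (relabel a' B') := by
    simpa [wordEquiv_iff_hasWord, juxt] using hsubst
  simpa using hBB'.colorEquiv

lemma ColorEquiv.cancel_pair (h : C.ColorEquiv es (cs ++ false :: true :: ds)) :
    C.ColorEquiv es (cs ++ ds) := by
  obtain ⟨_, _, A, B, rfl, hB, h⟩ := h
  obtain ⟨B, _, rfl, rfl, hD⟩ := exists_append_of_colors_eq hB
  obtain ⟨a, D, rfl, hD'⟩ := exists_cons_of_colors_eq hD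
  obtain ⟨b, D, rfl, rfl⟩ := exists_cons_of_colors_eq hD'
  let r x y := x = a ∧ y = b
  have hcap := HasWord.cap_pair (u := relabel Sum.inl (dual A) ++ relabel Sum.inr B)
    (c := true) (a := Sum.inr a) (b := Sum.inr b) (v := relabel Sum.inr D)
    (g := Sum.map id (Quot.mk r)) (by simpa [juxt] using wordEquiv_iff_hasWord.1 h) C.hasId_true
    (congrArg Sum.inr (Quot.sound ⟨rfl, rfl⟩)) fun p hp =>
      ⟨Sum.elim (p ∘ Sum.inl) (Quot.lift (p ∘ Sum.inr) (by rintro _ _ ⟨rfl, rfl⟩; exact hp)),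
        by rintro (x | x) <;> rfl⟩
  have hAB : C.WordEquiv A (relabel (Quot.mk r) (B ++ D)) := by
    simpa [wordEquiv_iff_hasWord, juxt] using hcap
  simpa using hAB.colorEquiv

lemma ColorEquiv.cancel_replicate {k : ℕ}
    (h : C.ColorEquiv es (cs ++ (List.replicate k false ++ (List.replicate k true ++ ds)))) :
    C.ColorEquiv es (cs ++ ds) := by
  induction k with
  | zero => exact h
  | succ k ih =>
    rw [List.replicate_succ', List.replicate_succ] at h
    have hcancel := ColorEquiv.cancel_pair (cs := cs ++ List.replicate k false) (by simpa using h)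
    exact ih (by simpa using hcancel)

lemma eq_append_false_true_or_replicate (cs : List Bool) :
    (∃ us vs, cs = us ++ false :: true :: vs) ∨
      ∃ a b, cs = List.replicate a true ++ List.replicate b false := by
  induction cs with
  | nil => exact Or.inr ⟨0, 0, rfl⟩
  | cons c cs ih =>
    obtain ⟨us, vs, rfl⟩ | ⟨a, b, rfl⟩ := ih
    · exact Or.inl ⟨c :: us, vs, rfl⟩
    · rcases c with _ | _
      · rcases a with _ | a
        · exact Or.inr ⟨0, b + 1, rfl⟩
        · exact Or.inl ⟨[], List.replicate a true ++ List.replicate b false, rfl⟩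
      · exact Or.inr ⟨a + 1, b, rfl⟩

lemma ColorEquiv.exists_replicate (h : C.ColorEquiv es cs) :
    ∃ a b, C.ColorEquiv es (List.replicate a true ++ List.replicate b false) := by
  induction hn : cs.length using Nat.strong_induction_on generalizing cs with
  | _ n ih =>
    obtain ⟨us, vs, rfl⟩ | ⟨a, b, rfl⟩ := eq_append_false_true_or_replicate cs
    · exact ih (us ++ vs).length (by simp at hn ⊢; omega) h.cancel_pair rfl
    · exact ⟨a, b, h⟩

end ColorEquiv

end PartitionCategory

/-! ### Isolated segments of noncrossing rows -/

namespace ColoredWord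

variable {α : Type*}

lemma exists_maximal_prefix (p : Bool × α → Prop) (A : ColoredWord α) :
    ∃ P R : ColoredWord α, A = P ++ R ∧ (∀ x ∈ P, p x) ∧ ∀ x ∈ R.head?, ¬ p x := by
  refine ⟨A.takeWhile (p ·), A.dropWhile (p ·), List.takeWhile_append_dropWhile.symm,
    fun x hx => by simpa using List.mem_takeWhile_imp hx, fun x hx => ?_⟩
  have hnot := List.head?_dropWhile_not (p ·) A
  rw [Option.mem_def.1 hx] at hnot
  simpa using hnot

/-- No two blocks of the word cross. -/
def IsNoncrossing (A : ColoredWord α) : Prop := ∀ a x, [a, x, a, x].Sublist (labels A) → a = x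

lemma IsNoncrossing.exists_isolated_append {P Q : ColoredWord α} (h : IsNoncrossing (P ++ Q)) :
    ∃ G S : ColoredWord α, Q = G ++ S ∧ (∀ a ∈ labels G, a ∉ labels P ∧ a ∉ labels S) ∧
      ∀ x ∈ S.head?, x.2 ∈ labels P := by
  obtain ⟨G, S, rfl, hG, hS⟩ := exists_maximal_prefix (fun x : Bool × α => x.2 ∉ labels P) Q
  replace hG : ∀ a ∈ labels G, a ∉ labels P := by
    intro a ha
    obtain ⟨x, hx, rfl⟩ := List.mem_map.1 ha
    exact hG x hx
  replace hS (x) (hx : x ∈ S.head?) : x.2 ∈ labels P := not_not.1 (hS x hx)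
  refine ⟨G, S, rfl, fun a ha => ⟨hG a ha, fun haS => ?_⟩, hS⟩
  obtain _ | ⟨y, S⟩ := S
  · simp at haS
  have hy : y.2 ∈ labels P := hS y rfl
  have hay : a ≠ y.2 := fun hay => hG a ha (hay ▸ hy)
  have haS : a ∈ labels S := (List.mem_cons.1 haS).resolve_left hay
  refine hay (h y.2 a ?_).symm
  rw [labels_append, labels_append, labels_cons]
  exact (List.singleton_sublist.2 hy).append ((List.singleton_sublist.2 ha).append
    ((List.singleton_sublist.2 haS).cons_cons _))

lemma IsNoncrossing.exists_isolated {A : ColoredWord α} (hA : IsNoncrossing A)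
    (hone : ¬ IsOneBlock A) : ∃ P G S : ColoredWord α, A = P ++ G ++ S ∧ P ≠ [] ∧ G ≠ [] ∧
      ∀ a ∈ labels G, a ∉ labels P ∧ a ∉ labels S := by
  obtain _ | ⟨x, A⟩ := A
  · simp [IsOneBlock] at hone
  obtain ⟨P, R, hPR, hP, hR⟩ := exists_maximal_prefix (fun y : Bool × α => y.2 = x.2) (x :: A)
  replace hP : ∀ a ∈ labels P, a = x.2 := by
    intro a ha
    obtain ⟨y, hy, rfl⟩ := List.mem_map.1 ha
    exact hP y hy
  obtain ⟨G, S, rfl, hG, hS⟩ := (hPR ▸ hA).exists_isolated_append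
  refine ⟨P, G, S, by simp [hPR], ?_, ?_, hG⟩
  · rintro rfl
    exact hR x (congrArg List.head? hPR).symm rfl
  · rintro rfl
    obtain rfl : S = [] := List.head?_eq_none_iff.1 <|
      Option.eq_none_iff_forall_not_mem.2 fun y hy => hR y hy (hP _ (hS y hy))
    replace hP : ∀ a ∈ labels (x :: A), a = x.2 := by simpa [hPR] using hP
    exact hone fun a ha b hb => (hP a ha).trans (hP b hb).symm

end ColoredWord

namespace PartitionCategory

open ColoredWord

universe u

variable {C : PartitionCategory} {α β γ δ : Type*}

lemma HasWord.isNoncrossing {w : ColoredWord α} (hnc : ∀ p ∈ C.mem, p.NonCrossing)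
    (h : C.HasWord w) : IsNoncrossing w := by
  intro a x hs
  obtain ⟨f, hf⟩ := List.sublist_iff_exists_fin_orderEmbedding_get_eq.1 hs
  let i (j : Fin 4) : Fin w.length := ⟨f j, (f j).2.trans_eq (length_labels w)⟩
  have hi (j : Fin 4) : (w.get (i j)).2 = [a, x, a, x].get j := by
    simpa [i, labels] using (hf j).symm
  have hlt (j j' : Fin 4) (hj : j < j') : (ofWords [] w).ptIdx (Sum.inr (i j')) <
      (ofWords [] w).ptIdx (Sum.inr (i j)) := by
    have hij : (i j : ℕ) < i j' := f.lt_iff_lt.2 hj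
    change 0 + (w.length - 1 - (i j' : ℕ)) < 0 + (w.length - 1 - (i j : ℕ))
    rw [Nat.zero_add, Nat.zero_add]
    exact Nat.sub_lt_sub_left (hij.trans_le (Nat.le_sub_one_of_lt (i j').2)) hij
  have hrel := hnc _ h (Sum.inr (i 3)) (Sum.inr (i 2)) (Sum.inr (i 1)) (Sum.inr (i 0))
    (hlt 2 3 (by decide)) (hlt 1 2 (by decide)) (hlt 0 1 (by decide))
    ((hi 3).trans (hi 1).symm) ((hi 2).trans (hi 0).symm)
  exact (hi 2).symm.trans (hrel.symm.trans (hi 3))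

lemma WordEquiv.isNoncrossing {A : ColoredWord α} {B : ColoredWord β}
    (hnc : ∀ p ∈ C.mem, p.NonCrossing) (h : C.WordEquiv A B) : IsNoncrossing B := by
  intro a x hs
  refine Sum.inr_injective ((wordEquiv_iff_hasWord.1 h).isNoncrossing hnc _ _ ?_)
  rw [juxt, labels_append, labels_relabel (f := Sum.inr)]
  exact (hs.map Sum.inr).trans (List.sublist_append_right _ _)

lemma WordEquiv.subst {A : ColoredWord δ} {X V : ColoredWord α} {X' Y : ColoredWord β} {g₁ : α → γ}
    {g₂ : β → γ} (h : C.WordEquiv A (X ++ V)) (h' : C.HasWord (dual X' ++ Y))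
    (hg : IsGluing X X' Set.univ Set.univ g₁ g₂) :
    C.WordEquiv A (relabel g₂ Y ++ relabel g₁ V) := by
  have hword : C.HasWord (relabel Sum.inl (dual A) ++ relabel Sum.inr X ++ relabel Sum.inr V) := by
    simpa [juxt] using wordEquiv_iff_hasWord.1 h
  have hglue : IsGluing (relabel Sum.inr X) X' Set.univ Set.univ (Sum.map (id : δ → δ) g₁)
      (fun b => Sum.inr (g₂ b)) := by
    refine ⟨by simpa using congrArg (relabel Sum.inr) hg.relabel_eq, fun h₁ h₂ hh => ?_⟩
    obtain ⟨k, hk₁, hk₂⟩ := hg.exists_desc (fun a => h₁ (Sum.inr a)) h₂ (by simpa using hh)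
    exact ⟨Sum.elim (h₁ ∘ Sum.inl) k, by rintro (d | a) -; exacts [rfl, hk₁ a trivial], hk₂⟩
  simpa [wordEquiv_iff_hasWord, juxt] using hword.subst h' hglue

lemma WordEquiv.trace {α : Type u} {P X R : ColoredWord α}
    (h : C.WordEquiv (P ++ X ++ R) (P ++ X ++ R)) (hP : ∀ c ∈ colors P, c = true)
    (hR : ∀ c ∈ colors R, c = false) :
    ∃ (γ : Type u) (g : α ⊕ α → γ), C.HasWord (relabel g (juxt (dual X) X)) ∧
      (∀ a ∈ labels P, g (Sum.inl a) = g (Sum.inr a)) ∧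
      ∀ a, Sum.elim id id a ∉ labels (P ++ R) → ∀ b, g a = g b → a = b := by
  have hword := wordEquiv_iff_hasWord.1 h
  obtain ⟨β, f, hf, hfP, hfi⟩ := HasWord.cap
    (u := relabel Sum.inl (dual R) ++ relabel Sum.inl (dual X))
    (X₁ := relabel Sum.inl P) (X₂ := relabel Sum.inr P)
    (v := relabel Sum.inr X ++ relabel Sum.inr R) (by simpa [juxt] using hword)
    (by simp) fun c hc => hP c (by simpa using hc) ▸ C.hasId_true
  have hdual : ∀ c ∈ colors (dual R), C.HasId c := by
    intro c hc
    obtain ⟨d, hd, rfl⟩ : ∃ d ∈ colors R, (!d) = c := by simpa using hc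
    simpa [hR d hd] using C.hasId_true
  have hrot := HasWord.rotate (x := relabel f (relabel Sum.inl (dual R)))
    (w := relabel f (relabel Sum.inl (dual X) ++ relabel Sum.inr X ++ relabel Sum.inr R))
    (by simpa using hdual) (by simpa using hf)
  obtain ⟨γ, g, hg, -, hgi⟩ := HasWord.cap
    (u := relabel f (relabel Sum.inl (dual X) ++ relabel Sum.inr X))
    (X₁ := relabel f (relabel Sum.inr (dual R))) (X₂ := relabel f (relabel Sum.inl (dual R)))
    (v := []) (by simpa using hrot) (by simp) (by simpa using hdual)
  refine ⟨γ, fun a => g (f a), by simpa [juxt] using hg, ?_, ?_⟩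
  · exact fun a ha => congrArg g (eq_of_relabel_eq (f := fun a => f (Sum.inl a))
      (g := fun a => f (Sum.inr a)) (by simpa using hfP) a ha)
  · intro a ha b hab
    simp only [labels_append, List.mem_append, not_or] at ha
    have hl : Function.LeftInverse (Sum.elim id id) (Sum.inl : α → α ⊕ α) := fun _ => rfl
    have hr : Function.LeftInverse (Sum.elim id id) (Sum.inr : α → α ⊕ α) := fun _ => rfl
    have hfa := hfi a (ha.1 ∘ mem_labels_of_mem_labels_relabel hl)
      (ha.1 ∘ mem_labels_of_mem_labels_relabel hr)
    have hfR {A : ColoredWord (α ⊕ α)} (hA : a ∉ labels A) : f a ∉ labels (relabel f A) := by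
      simp only [labels_relabel, List.mem_map, not_exists, not_and]
      exact fun b hb hba => hA (hfa b hba.symm ▸ hb)
    have haR : Sum.elim id id a ∉ labels (dual R) := by simpa using ha.2
    exact hfa b (hgi (f a) (hfR (haR ∘ mem_labels_of_mem_labels_relabel hr))
      (hfR (haR ∘ mem_labels_of_mem_labels_relabel hl)) (f b) hab)

lemma WordEquiv.hasId_false {P R : ColoredWord α} {a : α}
    (h : C.WordEquiv (P ++ [(false, a)] ++ R) (P ++ [(false, a)] ++ R))
    (hP : ∀ c ∈ colors P, c = true) (hR : ∀ c ∈ colors R, c = false) (ha : a ∈ labels P) :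
    C.HasId false := by
  obtain ⟨γ, g, hg, hga, -⟩ := h.trace hP hR
  have hword : C.HasWord (relabel (fun _ : Unit => g (Sum.inr a)) [(true, ()), (false, ())]) := by
    simpa [juxt, hga a ha] using hg
  exact (hasWord_relabel_iff (Function.injective_of_subsingleton _).injOn).1 hword

lemma WordEquiv.of_isolated {P X R : ColoredWord α}
    (h : C.WordEquiv (P ++ X ++ R) (P ++ X ++ R)) (hP : ∀ c ∈ colors P, c = true)
    (hR : ∀ c ∈ colors R, c = false) (hX : ∀ a ∈ labels X, a ∉ labels (P ++ R)) :
    C.WordEquiv X X := by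
  obtain ⟨γ, g, hg, -, hgi⟩ := h.trace hP hR
  rw [wordEquiv_iff_hasWord, ← hasWord_relabel_iff (f := g)]
  · exact hg
  · intro a ha b _ hab
    refine hgi a (hX _ ?_) b hab
    rcases a with a | a <;> simpa [juxt] using ha

lemma WordEquiv.exists_isolated_prefix {α : Type} {P G S : ColoredWord α}
    (h : C.WordEquiv (P ++ G ++ S) (P ++ G ++ S)) (hwhite : ∀ c ∈ colors (P ++ G ++ S), c = true)
    (hG : ∀ a ∈ labels G, a ∉ labels P ∧ a ∉ labels S) :
    ∃ (β : Type) (G' T : ColoredWord β), C.WordEquiv (G' ++ T) (G' ++ T) ∧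
      colors G' = colors G ∧ colors T = colors (P ++ S) ∧ ∀ a ∈ labels G', a ∉ labels T := by
  obtain ⟨hP, hG', hS⟩ : false ∉ colors P ∧ false ∉ colors G ∧ false ∉ colors S := by
    simpa [and_assoc] using hwhite
  -- Capping the two copies of `P` leaves a copy of `G ++ S` whose `G` is isolated; glued to the
  -- first points of the original row, it brings `G` to the front.
  obtain ⟨γ, f, hf, -, hfi⟩ := WordEquiv.trace (P := P) (X := G ++ S) (R := []) (by simpa using h)
    (fun c hc => hwhite c (by simp at hc ⊢; tauto)) (by simp)
  obtain ⟨X, V, hXV, hX, hV⟩ : ∃ X V, P ++ G ++ S = X ++ V ∧ colors X = colors (G ++ S) ∧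
      colors V = colors P := by
    refine exists_append_of_colors_eq ?_
    rw [← colors_append]
    exact colors_eq_of_forall_eq (c := true) hwhite
      (by simpa [and_assoc] using ⟨hG', hS, hP⟩) (by simp; omega)
  obtain ⟨β, g₁, g₂, hg⟩ := exists_isGluing (X := X)
    (X' := relabel (fun a => f (Sum.inl a)) (G ++ S)) (by simpa using hX)
  have hsubst := (hXV ▸ h).subst (Y := relabel (fun a => f (Sum.inr a)) (G ++ S))
    (by simpa [juxt] using hf) hg
  refine ⟨β, relabel (fun a => g₂ (f (Sum.inr a))) G,
    relabel (fun a => g₂ (f (Sum.inr a))) S ++ relabel g₁ V,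
    by simpa using hsubst.symm.trans hsubst rfl, by simp, ?_, ?_⟩
  · rw [colors_append, colors_relabel, colors_relabel, hV, ← colors_append]
    exact colors_eq_of_forall_eq (c := true) (by simpa using ⟨hS, hP⟩)
      (by simpa using ⟨hP, hS⟩) (by simp; omega)
  · intro b hb hbT
    obtain ⟨a, ha, rfl⟩ : ∃ a ∈ labels G, g₂ (f (Sum.inr a)) = b := by simpa using hb
    have hfa (x : α ⊕ α) (hx : f (Sum.inr a) = f x) : Sum.inr a = x :=
      hfi (Sum.inr a) (by simpa using (hG a ha).1) x hx
    have haX : f (Sum.inr a) ∉ labels (relabel (fun a => f (Sum.inl a)) (G ++ S)) := by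
      simp only [labels_relabel, List.mem_map, not_exists, not_and]
      exact fun x _ hx => Sum.inr_ne_inl (hfa _ hx.symm)
    obtain ⟨hne, hinj⟩ := hg.eq_of_notMem_labels haX
    rw [labels_append, List.mem_append, labels_relabel, labels_relabel, List.mem_map,
      List.mem_map] at hbT
    obtain ⟨s, hs, hsa⟩ | ⟨v, -, hva⟩ := hbT
    · exact (hG a ha).2 (Sum.inr_injective (hfa _ (hinj _ hsa).symm) ▸ hs)
    · exact hne v hva

lemma WordEquiv.colorEquiv_of_isolated {α : Type} {P G S : ColoredWord α}
    (h : C.WordEquiv (P ++ G ++ S) (P ++ G ++ S)) (hwhite : ∀ c ∈ colors (P ++ G ++ S), c = true)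
    (hG : ∀ a ∈ labels G, a ∉ labels P ∧ a ∉ labels S) :
    C.ColorEquiv (colors (P ++ S)) (colors (P ++ S)) := by
  obtain ⟨β, G', T, hGT, hG', hT, hdisj⟩ := h.exists_isolated_prefix hwhite hG
  rw [← hT]
  refine (WordEquiv.of_isolated (P := G') (X := T) (R := []) (by simpa using hGT) ?_ (by simp)
    fun a haT haG => hdisj a (by simpa using haG) haT).colorEquiv
  simp only [colors_append, List.mem_append] at hwhite
  exact fun c hc => hwhite c (Or.inl (Or.inr (hG' ▸ hc)))

/-! ### The colour sequences of the rows -/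

section WhitePeriod

variable {l n : ℕ} {c : Bool} {cs es : List Bool}

lemma ColorEquiv.replicate_mul (h : C.ColorEquiv (.replicate l c) (.replicate l c)) (k : ℕ) :
    C.ColorEquiv (.replicate (k * l) c) (.replicate (k * l) c) := by
  induction k with
  | zero => simpa using C.colorEquiv_nil
  | succ k ih => simpa only [add_mul, one_mul, List.replicate_add] using ih.append h

lemma ColorEquiv.cancel_le {a b : ℕ} (hba : b ≤ a) {cs ds : List Bool}
    (h : C.ColorEquiv es (cs ++ (.replicate a false ++ (.replicate b true ++ ds)))) :
    C.ColorEquiv es (cs ++ (.replicate (a - b) false ++ ds)) := by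
  rw [← List.append_assoc]
  refine ColorEquiv.cancel_replicate (k := b) ?_
  rw [← Nat.sub_add_cancel hba, List.replicate_add] at h
  simpa only [List.append_assoc] using h

lemma ColorEquiv.cancel_ge {a b : ℕ} (hab : a ≤ b) {cs ds : List Bool}
    (h : C.ColorEquiv es (cs ++ (.replicate a false ++ (.replicate b true ++ ds)))) :
    C.ColorEquiv es (cs ++ (.replicate (b - a) true ++ ds)) := by
  refine ColorEquiv.cancel_replicate (k := a) ?_
  rw [← List.append_assoc (List.replicate a true), List.replicate_append_replicate,
    Nat.add_sub_cancel' hab]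
  exact h

lemma betaP_mem_iff : betaP n c ∈ C.mem ↔ C.WordEquiv (block n c) (block n c) := by
  rw [betaP_eq_nonThrough_block, WordEquiv]

lemma WordEquiv.isOneBlock_or_exists_lt {α : Type} {A : ColoredWord α}
    (hnc : ∀ p ∈ C.mem, p.NonCrossing) (h : C.WordEquiv A A) (hA : colors A = .replicate n true) :
    IsOneBlock A ∨
      ∃ j, 1 ≤ j ∧ j < n ∧ C.ColorEquiv (.replicate j true) (.replicate j true) := by
  refine or_iff_not_imp_left.2 fun hone => ?_
  obtain ⟨P, G, S, rfl, hP, hG, hdisj⟩ := (h.isNoncrossing hnc).exists_isolated hone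
  have hwhite : ∀ c ∈ colors (P ++ G ++ S), c = true := fun c hc =>
    List.eq_of_mem_replicate (hA ▸ hc)
  have hPS : colors (P ++ S) = .replicate (P.length + S.length) true :=
    List.eq_replicate_iff.2 ⟨by simp, fun c hc => hwhite c (by simp at hc ⊢; tauto)⟩
  have hlen : P.length + G.length + S.length = n := by
    simpa [add_assoc] using congrArg List.length hA
  have hP := List.length_pos_iff.2 hP
  have hG := List.length_pos_iff.2 hG
  exact ⟨P.length + S.length, by omega, by omega, hPS ▸ h.colorEquiv_of_isolated hwhite hdisj⟩

lemma ColorEquiv.exists_betaP_mem (hnc : ∀ p ∈ C.mem, p.NonCrossing) (hn : 1 ≤ n)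
    (h : C.ColorEquiv (.replicate n true) (.replicate n true)) :
    ∃ j, 1 ≤ j ∧ j ≤ n ∧ betaP j true ∈ C.mem := by
  induction n using Nat.strong_induction_on with
  | _ n ih =>
    obtain ⟨α, _, A, B, hA, -, hAB⟩ := h
    have hAA := hAB.trans hAB.symm rfl
    obtain hone | ⟨j, hj, hjn, hadm⟩ := hAA.isOneBlock_or_exists_lt hnc hA
    · exact ⟨n, hn, le_rfl, nonThrough_eq_betaP hA hone ▸ hAA⟩
    · obtain ⟨i, hi, hij, hmem⟩ := ih j hjn hj hadm
      exact ⟨i, hi, hij.trans hjn.le, hmem⟩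

lemma WordEquiv.dual_of_hasId {α β : Type*} {A : ColoredWord α} {B : ColoredWord β}
    (hA : ∀ c ∈ colors (dual A), C.HasId c) (h : C.WordEquiv A B) :
    C.WordEquiv (dual B) (dual A) := by
  have hrot := HasWord.rotate (x := relabel Sum.inl (dual A)) (w := relabel Sum.inr B)
    (by simpa using hA) (wordEquiv_iff_hasWord.1 h)
  rw [wordEquiv_iff_hasWord, ← hasWord_relabel_iff Sum.swap_leftInverse.injective.injOn]
  simpa [juxt] using hrot

lemma WordEquiv.hasId_false_or_exists {α : Type} {A B : ColoredWord α}
    (hnc : ∀ p ∈ C.mem, p.NonCrossing) (h : C.WordEquiv (A ++ B) (A ++ B))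
    (hA : ∀ c ∈ colors A, c = true) (hB : ∀ c ∈ colors B, c = false) (hne : B ≠ []) :
    C.HasId false ∨ ∃ g, 1 ≤ g ∧ C.ColorEquiv (.replicate g false) (.replicate g false) := by
  obtain ⟨G, S, rfl, hG, hS⟩ := (h.isNoncrossing hnc).exists_isolated_append
  simp only [colors_append, List.forall_mem_append] at hB
  obtain rfl | hGne := eq_or_ne G []
  · obtain ⟨⟨c, a⟩, S, rfl⟩ := List.exists_cons_of_ne_nil hne
    obtain rfl : c = false := hB.2 c (by simp)
    refine Or.inl (WordEquiv.hasId_false (P := A) (R := S) (a := a) (by simpa using h) hA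
      (fun c hc => hB.2 c (by simp [hc])) (hS _ rfl))
  · have hGG : C.WordEquiv G G :=
      WordEquiv.of_isolated (P := A) (R := S) (by simpa using h) hA hB.2
        fun a ha => by simpa using hG a ha
    have hcol : colors G = .replicate G.length false :=
      List.eq_replicate_iff.2 ⟨length_colors G, hB.1⟩
    exact Or.inr ⟨G.length, List.length_pos_iff.2 hGne, by simpa [hcol] using hGG.colorEquiv⟩

lemma ColorEquiv.nil_replicate_append (h : C.ColorEquiv (.replicate n false) (.replicate n false)) :
    C.ColorEquiv [] (.replicate n true ++ .replicate n false) := by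
  simpa using h.nil_dual_append

lemma ColorEquiv.exists_replicate_mul
    (ht : C.ColorEquiv (.replicate l true) (.replicate l true))
    (hf : C.ColorEquiv (.replicate l false) (.replicate l false)) (a b : ℕ) :
    ∃ m c, C.ColorEquiv (.replicate l c) (.replicate l c) ∧
      C.ColorEquiv (.replicate (a * l) true ++ .replicate (b * l) false)
        (.replicate (m * l) c) := by
  have hnil (k : ℕ) := (hf.replicate_mul k).nil_replicate_append.symm
  obtain hba | hab := le_total b a
  · obtain ⟨k, rfl⟩ := Nat.exists_eq_add_of_le' hba
    refine ⟨k, true, ht, ?_⟩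
    simpa [add_mul, List.replicate_add, -List.replicate_append_replicate] using
      (ht.replicate_mul k).append (hnil b)
  · obtain ⟨k, rfl⟩ := Nat.exists_eq_add_of_le hab
    refine ⟨k, false, hf, ?_⟩
    simpa [add_mul, List.replicate_add, -List.replicate_append_replicate] using
      (hnil a).append (hf.replicate_mul k)

/-- The number `l` is the smallest positive length of an all-white row of a partition in `C` without
through-blocks. -/
def IsWhitePeriod (C : PartitionCategory) (l : ℕ) : Prop :=
  IsLeast {n | 1 ≤ n ∧ C.ColorEquiv (.replicate n true) (.replicate n true)} l

lemma IsWhitePeriod.of_betaP_mem (hnc : ∀ p ∈ C.mem, p.NonCrossing) (hl1 : 1 ≤ l)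
    (hl : betaP l true ∈ C.mem) (hmin : ∀ j, 1 ≤ j → j < l → betaP j true ∉ C.mem) :
    C.IsWhitePeriod l := by
  refine ⟨⟨hl1, by simpa using (betaP_mem_iff.1 hl).colorEquiv⟩, ?_⟩
  rintro n ⟨hn, hadm⟩
  obtain ⟨j, hj, hjn, hmem⟩ := hadm.exists_betaP_mem hnc hn
  exact (not_lt.1 fun hjl => hmin j hj hjl hmem).trans hjn

namespace IsWhitePeriod

variable (hl : C.IsWhitePeriod l)
include hl

lemma replicate_mul (k : ℕ) : C.ColorEquiv (.replicate (k * l) true) (.replicate (k * l) true) :=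
  hl.1.2.replicate_mul k

lemma dvd (h : C.ColorEquiv (.replicate n true) (.replicate n true)) : l ∣ n := by
  have hn : n = n / l * l + n % l := (Nat.div_add_mod' n l).symm
  rw [hn, List.replicate_add] at h
  have hmod := h.of_append_left (hl.replicate_mul (n / l))
  by_contra hdvd
  have hpos : 1 ≤ n % l := Nat.emod_pos_of_not_dvd hdvd
  exact (hl.2 ⟨hpos, hmod⟩).not_gt (Nat.mod_lt n hl.1.1)

lemma isOneBlock {α : Type} {A : ColoredWord α} (hnc : ∀ p ∈ C.mem, p.NonCrossing)
    (h : C.WordEquiv A A) (hA : colors A = .replicate l true) : IsOneBlock A :=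
  (h.isOneBlock_or_exists_lt hnc hA).resolve_right fun ⟨_, hj, hjl, hadm⟩ =>
    (hl.2 ⟨hj, hadm⟩).not_gt hjl

lemma betaP_false_mem (hnc : ∀ p ∈ C.mem, p.NonCrossing)
    (h : C.ColorEquiv (.replicate l false) (.replicate l false)) : betaP l false ∈ C.mem := by
  obtain ⟨α, _, A, _, hA, -, hAA⟩ := h
  obtain ⟨β, _, B, _, hB, -, hBB⟩ := hl.1.2
  replace hAA := hAA.trans hAA.symm rfl
  replace hBB := hBB.trans hBB.symm rfl
  have hcol : C.ColorEquiv [] (colors (juxt A B)) := by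
    simpa [hA, hB] using hl.1.2.nil_dual_append
  have hAB : C.HasWord (juxt A B) := by
    rw [← wordEquiv_nil_iff_hasWord (α := Unit)]
    exact WordEquiv.of_colorEquiv (wordEquiv_nil_iff_hasWord.2 C.hasWord_nil) (hAA.juxt hBB) hcol
  have hdual : C.WordEquiv (dual A) B := by simpa [wordEquiv_iff_hasWord] using hAB
  have hone := hl.isOneBlock hnc (hdual.trans hdual.symm rfl) (by simp [hA])
  rw [← nonThrough_eq_betaP hA (by simpa [IsOneBlock] using hone)]
  exact hAA

lemma betaP_mem (hnc : ∀ p ∈ C.mem, p.NonCrossing)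
    (h : C.ColorEquiv (.replicate l c) (.replicate l c)) : betaP l c ∈ C.mem := by
  cases c with
  | false => exact hl.betaP_false_mem hnc h
  | true =>
    obtain ⟨α, _, A, _, hA, -, hAB⟩ := h
    have hAA := hAB.trans hAB.symm rfl
    exact nonThrough_eq_betaP hA (hl.isOneBlock hnc hAA hA) ▸ hAA

lemma colorEquiv_false_of_hasId (hid : C.HasId false) :
    C.ColorEquiv (.replicate l false) (.replicate l false) := by
  obtain ⟨α, β, A, B, hA, hB, h⟩ := hl.1.2
  have hdual : C.WordEquiv (dual B) (dual A) :=
    h.dual_of_hasId fun c hc => by simp_all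
  simpa [hA, hB] using hdual.colorEquiv

lemma colorEquiv_false_of_pos (hn : 1 ≤ n)
    (h : C.ColorEquiv (.replicate n false) (.replicate n false)) :
    C.ColorEquiv (.replicate l false) (.replicate l false) := by
  have hmul : n ≤ n * l := Nat.le_mul_of_pos_right n hl.1.1
  have hwhite := ColorEquiv.cancel_ge (cs := []) (ds := []) hmul
    (by simpa using h.append (hl.replicate_mul n))
  have hdvd : l ∣ n := by
    have hdvd := hl.dvd (by simpa using hwhite.symm.trans hwhite)
    exact (Nat.dvd_sub_iff_right hmul (dvd_mul_left l n)).1 hdvd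
  obtain ⟨k, rfl⟩ := exists_eq_mul_left_of_dvd hdvd
  have hk : 1 ≤ k := Nat.pos_of_mul_pos_right hn
  have hblack := ColorEquiv.cancel_le (cs := []) (ds := []) (b := (k - 1) * l)
    (Nat.mul_le_mul_right l (Nat.sub_le k 1))
    (by simpa using h.append (hl.replicate_mul (k - 1)))
  have hsub : k * l - (k - 1) * l = l := by
    rw [← Nat.sub_mul, Nat.sub_sub_self hk, one_mul]
  simpa [hsub] using hblack.symm.trans hblack

lemma colorEquiv_false (hnc : ∀ p ∈ C.mem, p.NonCrossing) {a b : ℕ} (hb : b ≠ 0)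
    (h : C.ColorEquiv (.replicate a true ++ .replicate b false)
      (.replicate a true ++ .replicate b false)) :
    C.ColorEquiv (.replicate l false) (.replicate l false) := by
  obtain ⟨_, _, D, _, hD, -, hDE⟩ := h
  obtain ⟨A, B, rfl, hA, hB⟩ := exists_append_of_colors_eq hD
  have hne : B ≠ [] := by
    rintro rfl
    simp_all
  obtain hid | ⟨g, hg, hblack⟩ := (hDE.trans hDE.symm rfl).hasId_false_or_exists hnc
    (fun _ hc => List.eq_of_mem_replicate (hA ▸ hc))
    (fun _ hc => List.eq_of_mem_replicate (hB ▸ hc)) hne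
  · exact hl.colorEquiv_false_of_hasId hid
  · exact hl.colorEquiv_false_of_pos hg hblack

lemma exists_colorEquiv (hnc : ∀ p ∈ C.mem, p.NonCrossing) (h : C.ColorEquiv cs cs) :
    ∃ m c, C.ColorEquiv (.replicate l c) (.replicate l c) ∧
      C.ColorEquiv cs (.replicate (m * l) c) := by
  obtain ⟨a, b, hcs⟩ := h.exists_replicate
  obtain rfl | hb := eq_or_ne b 0
  · simp only [List.replicate_zero, List.append_nil] at hcs
    obtain ⟨m, rfl⟩ := exists_eq_mul_left_of_dvd (hl.dvd (hcs.symm.trans hcs))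
    exact ⟨m, true, hl.1.2, hcs⟩
  have hblack := hl.colorEquiv_false hnc hb (hcs.symm.trans hcs)
  have hbl : b ≤ b * l := Nat.le_mul_of_pos_right b hl.1.1
  have hpad : C.ColorEquiv cs (.replicate (a + (b * l - b)) true ++ .replicate (b * l) false) := by
    have happ := ColorEquiv.cancel_ge (es := cs) (cs := .replicate a true)
      (ds := .replicate (b * l) false) hbl
      (by simpa using hcs.append (hblack.replicate_mul b).nil_replicate_append)
    simpa [List.replicate_add, -List.replicate_append_replicate] using happ
  have hwhite := ColorEquiv.cancel_replicate (ds := []) (k := b * l)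
    (by simpa using hpad.append (hl.replicate_mul b))
  obtain ⟨k, hk⟩ := exists_eq_mul_left_of_dvd (hl.dvd (by simpa using hwhite.symm.trans hwhite))
  rw [hk] at hpad
  obtain ⟨m, c, hc, hm⟩ := hl.1.2.exists_replicate_mul hblack k b
  exact ⟨m, c, hc, hpad.trans hm⟩

end IsWhitePeriod

lemma tpow_mem {p : CPartition} (hp : p ∈ C.mem) (m : ℕ) : tpow p m ∈ C.mem := by
  induction m with
  | zero => exact betaP_mem_iff.2 (wordEquiv_nil_iff_hasWord.2 C.hasWord_nil)
  | succ m ih => exact C.tensor_mem _ _ ih hp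

lemma WordEquiv.equivIn {α β : Type*} {A : ColoredWord α} {B : ColoredWord β}
    (h : C.WordEquiv A B) : EquivIn C.mem (nonThrough A A) (nonThrough B B) := by
  refine ⟨nonThrough A B, h, ?_, ?_⟩
  · simp only [reflect_nonThrough, vcomp_nonThrough]
  · simp only [reflect_nonThrough, vcomp_nonThrough]

end WhitePeriod

end PartitionCategory

/-- let `C` be a category of noncrossing colored partitions and
`l ≥ 1` the smallest positive integer with `β_l ∈ C`. Then every projective
partition `p ∈ C` with no through-blocks is equivalent in `C` to `β_l^{⊗m}` or
to `β_{-l}^{⊗m}` for some `m ≥ 0`; in particular the group of equivalence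
classes of non-through projective partitions of `C` is cyclic (generated by the
class of `β_l`). -/
theorem nonThrough_classification (C : PartitionCategory)
    (hnc : ∀ p ∈ C.mem, p.NonCrossing)
    (l : ℕ) (hl1 : 1 ≤ l) (hl : betaP l true ∈ C.mem)
    (hmin : ∀ j, 1 ≤ j → j < l → betaP j true ∉ C.mem) :
    ∀ p ∈ C.mem, p.IsProjective → p.t = 0 →
      ∃ m : ℕ, EquivIn C.mem p (tpow (betaP l true) m) ∨
        EquivIn C.mem p (tpow (betaP l false) m) := by
  intro p hp hproj ht
  obtain ⟨α, A, rfl⟩ := hproj.exists_eq_nonThrough ht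
  have hAA : C.WordEquiv A A := hp
  have hperiod : C.IsWhitePeriod l :=
    PartitionCategory.IsWhitePeriod.of_betaP_mem hnc hl1 hl hmin
  obtain ⟨m, c, hc, hAm⟩ := hperiod.exists_colorEquiv hnc hAA.colorEquiv
  obtain ⟨β, B, hB, hpow⟩ := exists_tpow_betaP_eq_nonThrough l c m
  have hBB : nonThrough B B ∈ C.mem :=
    hpow ▸ PartitionCategory.tpow_mem (hperiod.betaP_mem hnc hc) m
  have hequiv : EquivIn C.mem (nonThrough A A) (tpow (betaP l c) m) :=
    hpow ▸ (hAA.of_colorEquiv hBB (hB ▸ hAm)).equivIn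
  refine ⟨m, ?_⟩
  cases c with
  | false => exact Or.inr hequiv
  | true => exact Or.inl hequiv
end
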